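/- Fix α ∈ (0,1) and p ∈ (0,1) with p ≠ 1/2, and let h = −p log p − q log q (logs base 2). Then D_n(α) / log log n → 1 / (−log(1 − h/log(1/√(pq)))) in probability as n → ∞; that is, for every ε > 0, P( |D_n(α) · (−log(1 − h/log(1/√(pq)))) / log log n − 1| > ε ) → 0. -/

import Mathlib

/-!
Partial fillup in tries (Janson–Szpankowski), Theorem 1 (two-point concentration
of the α-fillup level `F_n(α)`).

Model: an outcome `ω : ℕ → ℕ → Bool` encodes infinitely many strings, where
`ω i j` is the `j`-th bit of the `i`-th string; the measure `ν` makes all bits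
i.i.d. with `P(bit = 1) = p`.  The trie on `n` strings uses strings `0,…,n-1`.
-/

open MeasureTheory ProbabilityTheory Real Filter

/-- The number of strings among the first `n` (encoded in `ω`) whose first `k` bits
form the word `r ∈ {0,1}^k`. -/
def prefCount (ω : ℕ → ℕ → Bool) (n k : ℕ) (r : Fin k → Bool) : ℕ :=
  ((Finset.range n).filter fun i => ∀ j : Fin k, ω i j = r j).card

/-- `X_k`: the number of words `r ∈ {0,1}^k` that are prefixes of at least two of the
first `n` strings. -/
def fillCount (ω : ℕ → ℕ → Bool) (n k : ℕ) : ℕ :=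
  (Finset.univ.filter fun r : Fin k → Bool => 2 ≤ prefCount ω n k r).card

/-- `X̄_k = X_k / 2^k`, the proportion of filled words at level `k`. -/
noncomputable def fracFilled (ω : ℕ → ℕ → Bool) (n k : ℕ) : ℝ :=
  (fillCount ω n k : ℝ) / 2 ^ k

/-- The α-fillup level `F_n(α) = max {k : X̄_k ≥ α}`. -/
noncomputable def fillupLevel (α : ℝ) (ω : ℕ → ℕ → Bool) (n : ℕ) : ℕ :=
  sSup {k | α ≤ fracFilled ω n k}

/-- `ν` is a probability measure on `ℕ → ℕ → Bool` under which all the bits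
`ω i j` are i.i.d. with `P(bit = 1) = p` (characterized by cylinder probabilities). -/
def IIDBits (p : ℝ) (ν : Measure (ℕ → ℕ → Bool)) : Prop :=
  IsProbabilityMeasure ν ∧
    ∀ (S : Finset (ℕ × ℕ)) (b : ℕ × ℕ → Bool),
      ν {ω | ∀ s ∈ S, ω s.1 s.2 = b s} =
        ∏ s ∈ S, ENNReal.ofReal (if b s then p else 1 - p)

/-- For a family of strings given by the index set `S` (with the first `t` bits already
consumed), the number of words `r ∈ {0,1}^k` that are prefixes of at least two of the
(suffixes of the) strings of the family. -/
def fillCountFam (ω : ℕ → ℕ → Bool) (S : Finset ℕ) (t k : ℕ) : ℕ :=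
  (Finset.univ.filter fun r : Fin k → Bool =>
    2 ≤ (S.filter fun i => ∀ j : Fin k, ω i (t + j) = r j).card).card

/-- The α-fillup level `F(S)` of the family of suffixes (first `t` bits removed) of the
strings with index in `S`. -/
noncomputable def fillupLevelFam (α : ℝ) (ω : ℕ → ℕ → Bool) (S : Finset ℕ) (t : ℕ) : ℕ :=
  sSup {k | α ≤ (fillCountFam ω S t k : ℝ) / 2 ^ k}

/-- One level-compression step along the designated string `ξ_1` (index `0`): the family
`S` is replaced by the family of (suffixes of) those strings of `S` whose first
`F(S) + 1` remaining bits agree with those of `ξ_1`. -/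
noncomputable def lcStep (α : ℝ) (ω : ℕ → ℕ → Bool) : Finset ℕ × ℕ → Finset ℕ × ℕ :=
  fun St =>
    (St.1.filter fun i => ∀ j < fillupLevelFam α ω St.1 St.2 + 1,
        ω i (St.2 + j) = ω 0 (St.2 + j),
      St.2 + fillupLevelFam α ω St.1 St.2 + 1)

/-- The family (with offset) after `m` level-compression steps, starting from the `n`
strings `ξ_1, …, ξ_n` (indices `0, …, n-1`). -/
noncomputable def lcIter (α : ℝ) (ω : ℕ → ℕ → Bool) (n : ℕ) : ℕ → Finset ℕ × ℕ
  | 0 => (Finset.range n, 0)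
  | m + 1 => lcStep α ω (lcIter α ω n m)

/-- The depth `D_n(α)` of the designated string `ξ_1` in the α-LC trie: the number of
level-compression steps needed until `ξ_1`'s family has size `1`. -/
noncomputable def lcDepth (α : ℝ) (ω : ℕ → ℕ → Bool) (n : ℕ) : ℕ :=
  sInf {m | (lcIter α ω n m).1.card ≤ 1}

/-!
Measure the family met at offset `t` along string `0` by the logarithm `x` of its expected size,
`x = log n - (information content of the first t bits)`. A uniformly random word of length `k`
carries about `k log(1/√(pq))` bits of information, so the fill-up level of such a family is about
`x / log(1/√(pq))`. String `0` is instead a typical string of the model: over the bits consumed by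
the step it carries about `h` bits of information each, so the step multiplies `x` by about
`κ = 1 - h / log(1/√(pq))`. Starting from `log n`, the number of steps until `x` is bounded is
about `log log n / (-log κ)`, and only boundedly many steps remain after that.

At a given offset the step deviates from this with probability exponentially small in `x`. Since
each bit lowers `x` by at least a fixed amount, these probabilities sum geometrically over all
offsets with `x ≥ W`, to a bound that tends to `0` as `W → ∞`, uniformly in `n`.
-/

/-! ### Large deviations and counts of events -/

theorem exists_pos_sum_mul_exp_lt_one {ι : Type*} [Fintype ι] {w y : ι → ℝ}
    (hw : ∑ i, w i = 1) (hy : ∑ i, w i * y i < 0) :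
    ∃ l > 0, ∑ i, w i * exp (l * y i) < 1 := by
  have hderiv : HasDerivAt (fun l => ∑ i, w i * exp (l * y i)) (∑ i, w i * y i) 0 :=
    HasDerivAt.fun_sum fun i _ => by
      simpa using (((hasDerivAt_id (0 : ℝ)).mul_const (y i)).exp).const_mul (w i)
  have hslope := (hderiv.hasDerivWithinAt (s := Set.Ioi 0)).limsup_slope_le' (by simp) hy
  obtain ⟨l, hl, hpos⟩ := (hslope.and self_mem_nhdsWithin).exists
  have hpos' : 0 < l := hpos
  refine ⟨l, hpos', ?_⟩
  simpa [slope_def_field, hw, div_neg_iff, hpos', hpos'.le.not_gt] using hl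

theorem exists_sum_prod_le_two_rpow {ι : Type*} [Fintype ι] {w y : ι → ℝ}
    (hw₀ : ∀ i, 0 ≤ w i) (hw : ∑ i, w i = 1) (hy : ∑ i, w i * y i < 0) :
    ∃ θ > (0 : ℝ), ∀ k : ℕ,
      ∑ r : Fin k → ι with 0 ≤ ∑ i, y (r i), ∏ i, w (r i) ≤ (2 : ℝ) ^ (-(θ * k)) := by
  obtain ⟨l, hl, hlt⟩ := exists_pos_sum_mul_exp_lt_one hw hy
  set φ := ∑ i, w i * exp (l * y i)
  have hφ_pos : 0 < φ := by
    obtain ⟨i, -, hi⟩ := Finset.exists_ne_zero_of_sum_ne_zero (hw.trans_ne one_ne_zero)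
    exact Finset.sum_pos' (fun j _ => mul_nonneg (hw₀ j) (exp_pos _).le)
      ⟨i, Finset.mem_univ i, mul_pos ((hw₀ i).lt_of_ne' hi) (exp_pos _)⟩
  refine ⟨-logb 2 φ, neg_pos.2 (logb_neg one_lt_two hφ_pos hlt), fun k => ?_⟩
  calc ∑ r : Fin k → ι with 0 ≤ ∑ i, y (r i), ∏ i, w (r i)
      ≤ ∑ r : Fin k → ι with 0 ≤ ∑ i, y (r i), ∏ i, w (r i) * exp (l * y (r i)) := by
        refine Finset.sum_le_sum fun r hr => ?_
        have hr : 0 ≤ ∑ i, y (r i) := by simpa using hr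
        rw [Finset.prod_mul_distrib, ← exp_sum, ← Finset.mul_sum]
        exact le_mul_of_one_le_right (Finset.prod_nonneg fun i _ => hw₀ (r i))
          (one_le_exp (by positivity))
    _ ≤ ∑ r : Fin k → ι, ∏ i, w (r i) * exp (l * y (r i)) :=
        Finset.sum_le_sum_of_subset_of_nonneg (Finset.filter_subset _ _) fun r _ _ =>
          Finset.prod_nonneg fun i _ => mul_nonneg (hw₀ (r i)) (exp_pos _).le
    _ = φ ^ k := (Fintype.sum_pow (fun i => w i * exp (l * y i)) k).symm
    _ = 2 ^ (-(-logb 2 φ * k)) := by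
        rw [neg_mul, neg_neg, rpow_mul zero_le_two, rpow_logb two_pos (by norm_num) hφ_pos,
          rpow_natCast]

theorem tendsto_two_rpow_neg_mul_atTop {γ : ℝ} (hγ : 0 < γ) :
    Tendsto (fun x : ℝ => (2 : ℝ) ^ (-(γ * x))) atTop (nhds 0) :=
  (tendsto_rpow_atBot_of_base_gt_one 2 one_lt_two).comp
    (tendsto_neg_atTop_atBot.comp (tendsto_id.const_mul_atTop hγ))

theorem eventually_card_sum_nonneg_le {ι : Type*} [Fintype ι] {y : ι → ℝ} (hy : ∑ i, y i < 0)
    {δ : ℝ} (hδ : 0 < δ) :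
    ∀ᶠ k : ℕ in atTop,
      ({r : Fin k → ι | 0 ≤ ∑ i, y (r i)} : Finset _).card ≤ δ * (Fintype.card ι : ℝ) ^ k := by
  obtain ⟨i, -, -⟩ := Finset.exists_ne_zero_of_sum_ne_zero hy.ne
  have hcard : (0 : ℝ) < Fintype.card ι := Nat.cast_pos.2 (Fintype.card_pos_iff.2 ⟨i⟩)
  obtain ⟨θ, hθ, hle⟩ := exists_sum_prod_le_two_rpow (w := fun _ : ι => (Fintype.card ι : ℝ)⁻¹)
    (y := y) (fun _ => by positivity) (by simp [hcard.ne'])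
    (by rw [← Finset.mul_sum]; exact mul_neg_of_pos_of_neg (by positivity) hy)
  filter_upwards [((tendsto_two_rpow_neg_mul_atTop hθ).comp
    tendsto_natCast_atTop_atTop).eventually_le_const hδ] with k hk
  have := (hle k).trans hk
  simp only [Finset.prod_const, Finset.card_univ, Fintype.card_fin, Finset.sum_const,
    nsmul_eq_mul, inv_pow] at this
  rwa [← div_eq_mul_inv, div_le_iff₀ (by positivity)] at this

section Markov

variable {Ω : Type*} [MeasurableSpace Ω] {μ : Measure Ω} [IsFiniteMeasure μ] {ι : Type*}

theorem mul_measureReal_le_card_le_sum (s : Finset ι) (E : ι → Set Ω)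
    [∀ ω i, Decidable (ω ∈ E i)] (c : ℝ) :
    c * μ.real {ω | c ≤ (s.filter fun i => ω ∈ E i).card} ≤ ∑ i ∈ s, μ.real (E i) := by
  rcases le_or_gt c 0 with hc | hc
  · exact (mul_nonpos_of_nonpos_of_nonneg hc measureReal_nonneg).trans
      (Finset.sum_nonneg fun i _ => measureReal_nonneg)
  -- The `E i` need not be measurable, so Markov's inequality is applied to measurable hulls.
  let T i := toMeasurable μ (E i)
  let N : Ω → ℝ := fun ω => ∑ i ∈ s, (T i).indicator 1 ω
  have hT i : Integrable ((T i).indicator (1 : Ω → ℝ)) μ :=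
    (integrable_const 1).indicator (measurableSet_toMeasurable μ (E i))
  have hcard ω : ((s.filter fun i => ω ∈ E i).card : ℝ) ≤ N ω := by
    rw [← Finset.sum_boole]
    refine Finset.sum_le_sum fun i _ => ?_
    rw [← Pi.one_apply (M := fun _ => ℝ) ω, ← Set.indicator_apply]
    exact Set.indicator_le_indicator_of_subset (subset_toMeasurable μ (E i))
      (fun _ => zero_le_one) ω
  calc c * μ.real {ω | c ≤ (s.filter fun i => ω ∈ E i).card}
      ≤ c * μ.real {ω | c ≤ N ω} := by
        gcongr with ω
        exacts [measure_ne_top _ _, hcard ω]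
    _ ≤ ∫ ω, N ω ∂μ := mul_meas_ge_le_integral_of_nonneg
        (ae_of_all μ fun ω => (Nat.cast_nonneg _).trans (hcard ω))
        (integrable_finsetSum s fun i _ => hT i) c
    _ = ∑ i ∈ s, μ.real (E i) := by
        rw [integral_finsetSum s fun i _ => hT i]
        refine Finset.sum_congr rfl fun i _ => ?_
        rw [integral_indicator_one (measurableSet_toMeasurable μ (E i)), measureReal_def,
          measure_toMeasurable, measureReal_def]

theorem measureReal_le_card_le_of_exceptional [Fintype ι] [Nonempty ι] (E : ι → Set Ω)
    [∀ ω i, Decidable (ω ∈ E i)] {X : Finset ι} {δ η : ℝ} (hδ : 0 < δ)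
    (hX : X.card ≤ δ * Fintype.card ι) (hη : 0 ≤ η) (hE : ∀ i ∉ X, μ.real (E i) ≤ η) :
    μ.real {ω | 2 * δ * Fintype.card ι ≤ (Finset.univ.filter fun i => ω ∈ E i).card} ≤ η / δ := by
  classical
  have hN : (0 : ℝ) < Fintype.card ι := Nat.cast_pos.2 Fintype.card_pos
  have hsub : {ω | 2 * δ * Fintype.card ι ≤ (Finset.univ.filter fun i => ω ∈ E i).card} ⊆
      {ω | δ * Fintype.card ι ≤ (Xᶜ.filter fun i => ω ∈ E i).card} := by
    intro ω hω
    have hsplit : (Finset.univ.filter fun i => ω ∈ E i) ⊆ X ∪ Xᶜ.filter fun i => ω ∈ E i := by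
      intro i hi
      by_cases hiX : i ∈ X <;> simp_all
    have hcard : ((Finset.univ.filter fun i => ω ∈ E i).card : ℝ) ≤
        X.card + (Xᶜ.filter fun i => ω ∈ E i).card :=
      mod_cast (Finset.card_le_card hsplit).trans (Finset.card_union_le _ _)
    have hω : 2 * δ * Fintype.card ι ≤ (Finset.univ.filter fun i => ω ∈ E i).card := hω
    change δ * Fintype.card ι ≤ (Xᶜ.filter fun i => ω ∈ E i).card
    linarith
  rw [le_div_iff₀' hδ]
  refine le_of_mul_le_mul_left ?_ hN
  calc Fintype.card ι * (δ * μ.real _)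
      ≤ δ * Fintype.card ι *
          μ.real {ω | δ * Fintype.card ι ≤ (Xᶜ.filter fun i => ω ∈ E i).card} := by
        rw [← mul_assoc, mul_comm (Fintype.card ι : ℝ)]
        gcongr
        exact measure_ne_top _ _
    _ ≤ ∑ i ∈ Xᶜ, μ.real (E i) := mul_measureReal_le_card_le_sum Xᶜ E _
    _ ≤ ∑ _i ∈ Xᶜ, η := Finset.sum_le_sum fun i hi => hE i (Finset.mem_compl.1 hi)
    _ ≤ Fintype.card ι * η := by
        rw [Finset.sum_const, nsmul_eq_mul]
        gcongr
        exact Finset.card_le_univ _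

end Markov

section IndependentEvents

variable {Ω ι : Type*} [MeasurableSpace Ω] {μ : Measure Ω} {E : ι → Set Ω} {s : Finset ι}

theorem measureReal_sum_indicator_le_half_mean (hmeas : ∀ i, MeasurableSet (E i))
    (hE : iIndepSet E μ) (hc : 0 < ∑ j ∈ s, μ.real (E j)) :
    μ.real {ω | ∑ j ∈ s, (E j).indicator 1 ω ≤ (∑ j ∈ s, μ.real (E j)) / 2} ≤
      4 / ∑ j ∈ s, μ.real (E j) := by
  have := hE.isProbabilityMeasure
  set c := ∑ j ∈ s, μ.real (E j)
  let f : ι → Ω → ℝ := fun j => (E j).indicator fun _ => 1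
  have hf j : MemLp (f j) 2 μ := (memLp_const 1).indicator (hmeas j)
  have hmean_one j : ∫ ω, f j ω ∂μ = μ.real (E j) := integral_indicator_one (hmeas j)
  have hmean : ∫ ω, (∑ j ∈ s, f j) ω ∂μ = c := by
    simp only [Finset.sum_apply]
    rw [integral_finsetSum s fun j _ => (hf j).integrable one_le_two]
    exact Finset.sum_congr rfl fun j _ => hmean_one j
  have hvar : variance (∑ j ∈ s, f j) μ ≤ c := by
    rw [IndepFun.variance_sum (fun j _ => hf j) fun j _ k _ hjk =>
      hE.iIndepFun_indicator.indepFun hjk]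
    refine Finset.sum_le_sum fun j _ =>
      (variance_le_expectation_sq (hf j).aestronglyMeasurable).trans_eq ?_
    rw [← hmean_one j]
    refine integral_congr_ae (ae_of_all μ fun ω => ?_)
    by_cases hω : ω ∈ E j <;> simp [f, hω]
  have hcheb := ENNReal.toReal_le_of_le_ofReal
    (div_nonneg (variance_nonneg _ _) (sq_nonneg _))
    (meas_ge_le_variance_div_sq (memLp_finsetSum' s fun j _ => hf j) (half_pos hc))
  rw [hmean] at hcheb
  calc μ.real {ω | ∑ j ∈ s, (E j).indicator 1 ω ≤ c / 2}
      ≤ μ.real {ω | c / 2 ≤ |(∑ j ∈ s, f j) ω - c|} := by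
        refine measureReal_mono fun ω hω => ?_
        have hω : (∑ j ∈ s, f j) ω ≤ c / 2 := by rw [Finset.sum_apply]; exact hω
        change c / 2 ≤ |(∑ j ∈ s, f j) ω - c|
        exact le_abs.2 (Or.inr (by linarith))
    _ ≤ variance (∑ j ∈ s, f j) μ / (c / 2) ^ 2 := hcheb
    _ ≤ c / (c / 2) ^ 2 := by gcongr
    _ = 4 / c := by field_simp; norm_num

theorem measureReal_inter_sum_indicator_le_half_mean (hmeas : ∀ i, MeasurableSet (E i))
    (hE : iIndepSet E μ) {i : ι} (hi : i ∉ s) (hc : 0 < ∑ j ∈ s, μ.real (E j)) :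
    μ.real (E i ∩ {ω | ∑ j ∈ s, (E j).indicator 1 ω ≤ (∑ j ∈ s, μ.real (E j)) / 2}) ≤
      μ.real (E i) * (4 / ∑ j ∈ s, μ.real (E j)) := by
  let f : ι → Ω → ℝ := fun j => (E j).indicator fun _ => 1
  have hindep : IndepFun (f i) (∑ j ∈ s, f j) μ :=
    (hE.iIndepFun_indicator.indepFun_finsetSum_of_notMem
      (fun j => measurable_const.indicator (hmeas j)) hi).symm
  have hEi : E i = f i ⁻¹' {1} := by ext ω; by_cases hω : ω ∈ E i <;> simp [f, hω]
  have hlow : {ω | ∑ j ∈ s, (E j).indicator 1 ω ≤ (∑ j ∈ s, μ.real (E j)) / 2} =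
      (∑ j ∈ s, f j) ⁻¹' Set.Iic ((∑ j ∈ s, μ.real (E j)) / 2) := by
    ext ω
    rw [Set.mem_preimage, Finset.sum_apply]
    rfl
  have hmul := hindep.measure_inter_preimage_eq_mul {1} (Set.Iic ((∑ j ∈ s, μ.real (E j)) / 2))
    (measurableSet_singleton 1) measurableSet_Iic
  rw [← hlow, ← hEi] at hmul
  rw [measureReal_def, hmul, ENNReal.toReal_mul]
  exact mul_le_mul_of_nonneg_left (measureReal_sum_indicator_le_half_mean hmeas hE hc)
    measureReal_nonneg

end IndependentEvents

theorem sum_two_rpow_neg_le_of_separated {ι : Type*} {s : Finset ι} {x : ι → ℝ} {γ c W : ℝ}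
    (hγ : 0 < γ) (hc : 0 < c) (hsep : (s : Set ι).Pairwise fun i j => c ≤ |x i - x j|)
    (hW : ∀ i ∈ s, W ≤ x i) :
    ∑ i ∈ s, (2 : ℝ) ^ (-(γ * x i)) ≤ 2 ^ (-(γ * W)) / (1 - 2 ^ (-(γ * c))) := by
  let e : ι → ℕ := fun i => ⌊(x i - W) / c⌋₊
  have hinj : Set.InjOn e s := by
    intro i hi j hj hij
    by_contra hne
    have hnonneg : ∀ a ∈ s, 0 ≤ (x a - W) / c := fun a ha =>
      div_nonneg (sub_nonneg.2 (hW a ha)) hc.le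
    have hi' := (Nat.floor_eq_iff (hnonneg i hi)).1 rfl
    have hj' := (Nat.floor_eq_iff (hnonneg j hj)).1 hij.symm
    have hlt : |(x i - W) / c - (x j - W) / c| < 1 := abs_lt.2 ⟨by linarith, by linarith⟩
    rw [← sub_div, sub_sub_sub_cancel_right, abs_div, abs_of_pos hc, div_lt_one hc] at hlt
    exact hlt.not_ge (hsep hi hj hne)
  set ρ : ℝ := 2 ^ (-(γ * c)) with hρ
  have hρ_pos : 0 ≤ ρ := by positivity
  have hρ_lt : ρ < 1 := rpow_lt_one_of_one_lt_of_neg one_lt_two (by nlinarith)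
  have hterm : ∀ i ∈ s, (2 : ℝ) ^ (-(γ * x i)) ≤ 2 ^ (-(γ * W)) * ρ ^ e i := by
    intro i hi
    have hfloor : e i ≤ (x i - W) / c :=
      Nat.floor_le (div_nonneg (sub_nonneg.2 (hW i hi)) hc.le)
    rw [le_div_iff₀ hc] at hfloor
    rw [hρ, ← rpow_natCast, ← rpow_mul zero_le_two, ← rpow_add two_pos]
    exact rpow_le_rpow_of_exponent_le one_le_two (by nlinarith)
  calc ∑ i ∈ s, (2 : ℝ) ^ (-(γ * x i))
      ≤ ∑ i ∈ s, 2 ^ (-(γ * W)) * ρ ^ e i := Finset.sum_le_sum hterm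
    _ = 2 ^ (-(γ * W)) * ∑ m ∈ s.image e, ρ ^ m := by
        rw [Finset.sum_image hinj, Finset.mul_sum]
    _ ≤ 2 ^ (-(γ * W)) * ∑' m : ℕ, ρ ^ m := by
        gcongr
        exact (summable_geometric_of_lt_one hρ_pos hρ_lt).sum_le_tsum _ fun m _ => by positivity
    _ = 2 ^ (-(γ * W)) / (1 - ρ) := by
        rw [tsum_geometric_of_lt_one hρ_pos hρ_lt, div_eq_mul_inv]

/-! ### Words and prefixes -/

/-- The probability of a single bit under the model `IIDBits p`. -/
noncomputable def bitProb (p : ℝ) (b : Bool) : ℝ := if b then p else 1 - p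

/-- The information content, in binary units, of a single bit. -/
noncomputable def bitInfo (p : ℝ) (b : Bool) : ℝ := -logb 2 (bitProb p b)

/-- The probability that a random string starts with the word `v`. -/
noncomputable def wordProb (p : ℝ) {t : ℕ} (v : Fin t → Bool) : ℝ := ∏ j, bitProb p (v j)

/-- The information content of the word `v`. -/
noncomputable def wordInfo (p : ℝ) {t : ℕ} (v : Fin t → Bool) : ℝ := ∑ j, bitInfo p (v j)

/-- The binary logarithm of the expected number of strings among `n` that start with `v`. It is
the size parameter of the subproblem met below `v`, and its decay along the designated string
governs the depth. -/
noncomputable def logMass (p : ℝ) (n : ℕ) {t : ℕ} (v : Fin t → Bool) : ℝ :=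
  logb 2 n - wordInfo p v

/-- The smallest information content of a bit, the least possible drop of `logMass` per bit. -/
noncomputable def minInfo (p : ℝ) : ℝ := min (bitInfo p true) (bitInfo p false)

/-- The prefix of length `t` of a string. -/
def firstBits (u : ℕ → Bool) (t : ℕ) : Fin t → Bool := fun j => u j

/-- The logarithmic mass of the prefix of length `t` of the string `u`. -/
noncomputable def pathMass (p : ℝ) (n : ℕ) (u : ℕ → Bool) (t : ℕ) : ℝ :=
  logMass p n (firstBits u t)

/-- The event that string `i` starts with the word `v`. -/
def prefixEvent (i : ℕ) {t : ℕ} (v : Fin t → Bool) : Set (ℕ → ℕ → Bool) :=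
  {ω | firstBits (ω i) t = v}

section Words

variable {p : ℝ} {t k : ℕ}

theorem firstBits_add (u : ℕ → Bool) (t k : ℕ) :
    firstBits u (t + k) = Fin.append (firstBits u t) fun j : Fin k => u (t + j) := by
  refine funext ((Fin.forall_fin_add _).2 ⟨fun j => ?_, fun j => ?_⟩) <;> simp [firstBits]

theorem prefixEvent_append (i : ℕ) (v : Fin t → Bool) (r : Fin k → Bool) :
    prefixEvent i (Fin.append v r) = prefixEvent i v ∩ {ω | ∀ j : Fin k, ω i (t + j) = r j} := by
  ext ω
  simp [prefixEvent, firstBits, funext_iff, Fin.forall_fin_add]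

theorem wordProb_append (v : Fin t → Bool) (r : Fin k → Bool) :
    wordProb p (Fin.append v r) = wordProb p v * wordProb p r := by
  simp [wordProb, Fin.prod_univ_add]

theorem wordInfo_append (v : Fin t → Bool) (r : Fin k → Bool) :
    wordInfo p (Fin.append v r) = wordInfo p v + wordInfo p r := by
  simp [wordInfo, Fin.sum_univ_add]

theorem logMass_append (n : ℕ) (v : Fin t → Bool) (r : Fin k → Bool) :
    logMass p n (Fin.append v r) = logMass p n v - wordInfo p r := by
  rw [logMass, wordInfo_append, logMass, sub_sub]

theorem pathMass_zero (n : ℕ) (u : ℕ → Bool) : pathMass p n u 0 = logb 2 n := by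
  simp [pathMass, logMass, wordInfo]

theorem pathMass_add (n : ℕ) (u : ℕ → Bool) (t k : ℕ) :
    pathMass p n u (t + k) = pathMass p n u t - ∑ j : Fin k, bitInfo p (u (t + j)) := by
  rw [pathMass, firstBits_add, logMass_append, pathMass, wordInfo]

theorem minInfo_le_bitInfo (b : Bool) : minInfo p ≤ bitInfo p b := by
  cases b
  exacts [min_le_right _ _, min_le_left _ _]

theorem minInfo_mul_le_wordInfo (r : Fin k → Bool) : minInfo p * k ≤ wordInfo p r := by
  simpa [wordInfo, mul_comm] using
    Finset.sum_le_sum fun (j : Fin k) (_ : j ∈ Finset.univ) => minInfo_le_bitInfo (p := p) (r j)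

theorem pathMass_add_le (n : ℕ) (u : ℕ → Bool) (t k : ℕ) :
    pathMass p n u (t + k) ≤ pathMass p n u t - minInfo p * k := by
  rw [pathMass_add]
  exact sub_le_sub_left (minInfo_mul_le_wordInfo _) _

variable (hp : p ∈ Set.Ioo (0 : ℝ) 1)
include hp

theorem bitProb_pos (b : Bool) : 0 < bitProb p b := by
  cases b <;> simp [bitProb, hp.1, hp.2]

theorem bitProb_lt_one (b : Bool) : bitProb p b < 1 := by
  cases b <;> simp [bitProb, hp.1, hp.2]

theorem wordProb_pos (v : Fin t → Bool) : 0 < wordProb p v :=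
  Finset.prod_pos fun j _ => bitProb_pos hp (v j)

theorem minInfo_pos : 0 < minInfo p :=
  lt_min (neg_pos.2 (logb_neg one_lt_two (bitProb_pos hp _) (bitProb_lt_one hp _)))
    (neg_pos.2 (logb_neg one_lt_two (bitProb_pos hp _) (bitProb_lt_one hp _)))

theorem mul_wordProb_eq_two_rpow_logMass {n : ℕ} (hn : 1 ≤ n) (v : Fin t → Bool) :
    n * wordProb p v = 2 ^ logMass p n v := by
  have hword : wordProb p v = 2 ^ (-wordInfo p v) := by
    rw [wordInfo, ← Finset.sum_neg_distrib, rpow_sum_of_pos two_pos]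
    refine Finset.prod_congr rfl fun j _ => ?_
    rw [bitInfo, neg_neg, rpow_logb two_pos (by norm_num) (bitProb_pos hp _)]
  have hn : (0 : ℝ) < n := by positivity
  rw [logMass, sub_eq_add_neg, rpow_add two_pos, rpow_logb two_pos (by norm_num) hn, hword]

theorem antitone_pathMass (n : ℕ) (u : ℕ → Bool) : Antitone (pathMass p n u) :=
  antitone_nat_of_succ_le fun t => (pathMass_add_le n u t 1).trans
    (sub_le_self _ (mul_nonneg (minInfo_pos hp).le (Nat.cast_nonneg 1)))

theorem minInfo_le_abs_pathMass_sub (n : ℕ) (u : ℕ → Bool) {t t' : ℕ} (h : t ≠ t') :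
    minInfo p ≤ |pathMass p n u t - pathMass p n u t'| := by
  wlog hlt : t < t' generalizing t t'
  · rw [abs_sub_comm]
    exact this h.symm (h.symm.lt_of_le (not_lt.1 hlt))
  obtain ⟨k, rfl⟩ := Nat.exists_eq_add_of_lt hlt
  have hdrop := pathMass_add_le (p := p) n u t (k + 1)
  have hk : minInfo p ≤ minInfo p * (k + 1 : ℕ) :=
    le_mul_of_one_le_right (minInfo_pos hp).le (by simp)
  refine le_abs.2 (Or.inl ?_)
  rw [add_assoc]
  linarith

end Words

theorem measurable_firstBits (i t : ℕ) :
    Measurable fun ω : ℕ → ℕ → Bool => firstBits (ω i) t :=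
  measurable_pi_lambda _ fun j => (measurable_pi_apply (j : ℕ)).comp (measurable_pi_apply i)

theorem measurableSet_prefixEvent (i : ℕ) {t : ℕ} (v : Fin t → Bool) :
    MeasurableSet (prefixEvent i v) :=
  measurable_firstBits i t (measurableSet_singleton v)

section Model

variable {p : ℝ} {ν : Measure (ℕ → ℕ → Bool)} (hp : p ∈ Set.Ioo (0 : ℝ) 1) (hν : IIDBits p ν)
include hp hν

theorem IIDBits.measure_biInter_prefixEvent (I : Finset ℕ) (w : ℕ → Σ t, Fin t → Bool) :
    ν (⋂ i ∈ I, prefixEvent i (w i).2) = ∏ i ∈ I, ENNReal.ofReal (wordProb p (w i).2) := by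
  let S := I.biUnion fun i => {i} ×ˢ Finset.range (w i).1
  let b : ℕ × ℕ → Bool := fun s => if h : s.2 < (w s.1).1 then (w s.1).2 ⟨s.2, h⟩ else false
  have hS : ∀ s : ℕ × ℕ, s ∈ S ↔ s.1 ∈ I ∧ s.2 ∈ Finset.range (w s.1).1 := by
    rintro ⟨i, j⟩
    simp [S]
  have hevent : ⋂ i ∈ I, prefixEvent i (w i).2 = {ω | ∀ s ∈ S, ω s.1 s.2 = b s} := by
    ext ω
    simp only [Set.mem_iInter, prefixEvent, Set.mem_ofPred_eq, funext_iff, firstBits, hS,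
      Finset.mem_range]
    refine ⟨fun h s hs => ?_, fun h i hi j => ?_⟩
    · simpa [b, hs.2] using h s.1 hs.1 ⟨s.2, hs.2⟩
    · simpa [b] using h (i, j) ⟨hi, j.2⟩
  rw [hevent, hν.2, Finset.prod_finset_product S I (fun i => Finset.range (w i).1) hS]
  refine Finset.prod_congr rfl fun i _ => ?_
  rw [wordProb, ENNReal.ofReal_prod_of_nonneg fun j _ => (bitProb_pos hp _).le, Finset.prod_range]
  exact Finset.prod_congr rfl fun j _ => by simp [b, bitProb]

theorem IIDBits.measure_prefixEvent (i : ℕ) {t : ℕ} (v : Fin t → Bool) :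
    ν (prefixEvent i v) = ENNReal.ofReal (wordProb p v) := by
  simpa using hν.measure_biInter_prefixEvent hp {i} fun _ => ⟨t, v⟩

theorem IIDBits.measureReal_prefixEvent (i : ℕ) {t : ℕ} (v : Fin t → Bool) :
    ν.real (prefixEvent i v) = wordProb p v := by
  rw [measureReal_def, hν.measure_prefixEvent hp, ENNReal.toReal_ofReal (wordProb_pos hp v).le]

theorem IIDBits.iIndepSet_prefixEvent (w : ℕ → Σ t, Fin t → Bool) :
    iIndepSet (fun i => prefixEvent i (w i).2) ν := by
  refine (iIndepSet_iff_meas_biInter fun i => measurableSet_prefixEvent i (w i).2).2 fun I => ?_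
  simp only [hν.measure_biInter_prefixEvent hp, hν.measure_prefixEvent hp]

end Model

/-! ### The fill-up level of a prefix family -/

section Counts

variable {p : ℝ} {ν : Measure (ℕ → ℕ → Bool)} {n t s : ℕ}

theorem prefCount_eq_card_firstBits (ω : ℕ → ℕ → Bool) (n : ℕ) (u : Fin s → Bool) :
    prefCount ω n s u = ((Finset.range n).filter fun i => firstBits (ω i) s = u).card := by
  simp only [prefCount, firstBits, funext_iff]

theorem sum_indicator_prefixEvent_le_prefCount (ω : ℕ → ℕ → Bool) (n : ℕ) (u : Fin s → Bool) :
    ∑ i ∈ Finset.Ico 1 n, (prefixEvent i u).indicator (1 : (ℕ → ℕ → Bool) → ℝ) ω ≤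
      prefCount ω n s u := by
  simp only [prefCount_eq_card_firstBits, prefixEvent, Set.indicator_apply, Set.mem_ofPred_eq,
    Pi.one_apply, Finset.sum_boole]
  gcongr
  intro i hi
  exact Finset.mem_range.2 (Finset.mem_Ico.1 hi).2

variable (hp : p ∈ Set.Ioo (0 : ℝ) 1) (hν : IIDBits p ν)
include hp hν

/- String `0` is left out of the count to make it independent of `prefixEvent 0 v`. -/
theorem IIDBits.measureReal_prefixEvent_inter_sum_indicator_le (v : Fin t → Bool)
    (u : Fin s → Bool) (hn : 2 ≤ n) :
    ν.real (prefixEvent 0 v ∩ {ω | ∑ i ∈ Finset.Ico 1 n, (prefixEvent i u).indicator 1 ω ≤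
        (n - 1) * wordProb p u / 2}) ≤
      wordProb p v * (4 / ((n - 1) * wordProb p u)) := by
  let w : ℕ → Σ t, Fin t → Bool := fun i => if i = 0 then ⟨t, v⟩ else ⟨s, u⟩
  have hw : ∀ i ∈ Finset.Ico 1 n, w i = ⟨s, u⟩ := fun i hi =>
    if_neg (Nat.one_le_iff_ne_zero.1 (Finset.mem_Ico.1 hi).1)
  have hmean : ∑ i ∈ Finset.Ico 1 n, ν.real (prefixEvent i (w i).2) = (n - 1) * wordProb p u := by
    rw [Finset.sum_congr rfl fun i hi => by rw [hw i hi, hν.measureReal_prefixEvent hp],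
      Finset.sum_const, Nat.card_Ico, nsmul_eq_mul, Nat.cast_sub (by lia), Nat.cast_one]
  have hcount : ∀ ω, ∑ i ∈ Finset.Ico 1 n, (prefixEvent i (w i).2).indicator 1 ω =
      ∑ i ∈ Finset.Ico 1 n, (prefixEvent i u).indicator (1 : (ℕ → ℕ → Bool) → ℝ) ω := fun ω =>
    Finset.sum_congr rfl fun i hi => by rw [hw i hi]
  have hn : (2 : ℝ) ≤ n := mod_cast hn
  have hcheb := measureReal_inter_sum_indicator_le_half_mean (i := 0) (s := Finset.Ico 1 n)
    (fun i => measurableSet_prefixEvent i (w i).2) (hν.iIndepSet_prefixEvent hp w) (by simp)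
    (by rw [hmean]; exact mul_pos (by linarith) (wordProb_pos hp u))
  simp only [hmean, hcount] at hcheb
  rwa [hν.measureReal_prefixEvent hp] at hcheb

theorem IIDBits.measureReal_prefixEvent_inter_prefCount_le_one (v : Fin t → Bool)
    (u : Fin s → Bool) (hu : 4 ≤ n * wordProb p u) :
    ν.real (prefixEvent 0 v ∩ {ω | prefCount ω n s u ≤ 1}) ≤
      wordProb p v * (8 / (n * wordProb p u)) := by
  have := hν.1
  have hu_pos := wordProb_pos hp u
  have hu_le : wordProb p u ≤ 1 := hν.measureReal_prefixEvent hp 0 u ▸ measureReal_le_one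
  have hn : (2 : ℝ) ≤ n := by nlinarith
  have hhalf : n * wordProb p u / 2 ≤ (n - 1) * wordProb p u := by nlinarith
  calc ν.real (prefixEvent 0 v ∩ {ω | prefCount ω n s u ≤ 1})
      ≤ ν.real (prefixEvent 0 v ∩ {ω | ∑ i ∈ Finset.Ico 1 n, (prefixEvent i u).indicator 1 ω ≤
          (n - 1) * wordProb p u / 2}) := by
        refine measureReal_mono (Set.inter_subset_inter_right _ fun ω hω => ?_)
        have hω : (prefCount ω n s u : ℝ) ≤ 1 := mod_cast Set.mem_ofPred_eq.mp hω
        exact (sum_indicator_prefixEvent_le_prefCount ω n u).trans (hω.trans (by linarith))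
    _ ≤ wordProb p v * (4 / ((n - 1) * wordProb p u)) :=
        hν.measureReal_prefixEvent_inter_sum_indicator_le hp v u (mod_cast hn)
    _ ≤ wordProb p v * (4 / (n * wordProb p u / 2)) := by
        have := wordProb_pos hp v
        gcongr
    _ = wordProb p v * (8 / (n * wordProb p u)) := by field_simp; ring

theorem IIDBits.measureReal_prefixEvent_inter {i : ℕ} (hi : i ≠ 0) (v : Fin t → Bool)
    (u : Fin s → Bool) :
    ν.real (prefixEvent 0 v ∩ prefixEvent i u) = wordProb p v * wordProb p u := by
  have hpair := hν.measure_biInter_prefixEvent hp {0, i} fun j => if j = 0 then ⟨t, v⟩ else ⟨s, u⟩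
  rw [Finset.prod_pair hi.symm, Finset.set_biInter_insert, Finset.set_biInter_singleton] at hpair
  rw [if_pos rfl, if_neg hi] at hpair
  rw [measureReal_def, hpair, ENNReal.toReal_mul, ENNReal.toReal_ofReal (wordProb_pos hp v).le,
    ENNReal.toReal_ofReal (wordProb_pos hp u).le]

theorem IIDBits.measureReal_prefixEvent_inter_two_le_prefCount (n : ℕ) (v : Fin t → Bool)
    (u : Fin s → Bool) :
    ν.real (prefixEvent 0 v ∩ {ω | 2 ≤ prefCount ω n s u}) ≤
      wordProb p v * (n * wordProb p u) := by
  have := hν.1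
  have hsub : prefixEvent 0 v ∩ {ω | 2 ≤ prefCount ω n s u} ⊆
      ⋃ i ∈ Finset.Ico 1 n, prefixEvent 0 v ∩ prefixEvent i u := by
    rintro ω ⟨hv, hω⟩
    have hω : 2 ≤ prefCount ω n s u := hω
    rw [prefCount_eq_card_firstBits] at hω
    obtain ⟨i, hi, hi0⟩ := Finset.exists_mem_ne hω 0
    rw [Finset.mem_filter, Finset.mem_range] at hi
    exact Set.mem_biUnion (Finset.mem_Ico.2 ⟨Nat.one_le_iff_ne_zero.2 hi0, hi.1⟩) ⟨hv, hi.2⟩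
  calc ν.real (prefixEvent 0 v ∩ {ω | 2 ≤ prefCount ω n s u})
      ≤ ∑ i ∈ Finset.Ico 1 n, ν.real (prefixEvent 0 v ∩ prefixEvent i u) :=
        (measureReal_mono hsub (measure_ne_top _ _)).trans (measureReal_biUnion_finset_le _ _)
    _ = (n - 1 : ℕ) * (wordProb p v * wordProb p u) := by
        rw [Finset.sum_congr rfl fun i hi => hν.measureReal_prefixEvent_inter hp
            (Nat.one_le_iff_ne_zero.1 (Finset.mem_Ico.1 hi).1) v u,
          Finset.sum_const, Nat.card_Ico, nsmul_eq_mul]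
    _ ≤ n * (wordProb p v * wordProb p u) := by
        have hpos := mul_pos (wordProb_pos hp v) (wordProb_pos hp u)
        gcongr
        exact n.sub_le 1
    _ = wordProb p v * (n * wordProb p u) := mul_left_comm _ _ _

end Counts

/-- The indices below `n` of the strings that agree with string `0` on the first `t` bits: the
family reached by level compression when the offset is `t`. -/
def prefixFamily (ω : ℕ → ℕ → Bool) (n t : ℕ) : Finset ℕ :=
  (Finset.range n).filter fun i => firstBits (ω i) t = firstBits (ω 0) t

/-- The proportion of words of length `k` that are prefixes of at least two of the strings of `S`
with their first `t` bits removed; `fillupLevelFam` compares it with `α`. -/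
noncomputable def fillFraction (ω : ℕ → ℕ → Bool) (S : Finset ℕ) (t k : ℕ) : ℝ :=
  fillCountFam ω S t k / 2 ^ k

section FillFraction

variable {ω : ℕ → ℕ → Bool} {S : Finset ℕ} {t k k₁ k₂ : ℕ} {α : ℝ}

theorem fillCountFam_succ_le (ω : ℕ → ℕ → Bool) (S : Finset ℕ) (t k : ℕ) :
    fillCountFam ω S t (k + 1) ≤ fillCountFam ω S t k * 2 := by
  rw [fillCountFam, fillCountFam]
  refine (Finset.card_le_card_of_injOn (t := Finset.filter _ Finset.univ ×ˢ Finset.univ)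
    (fun r => (Fin.init r, r (Fin.last k))) (fun r hr => ?_) fun r _ r' _ h => ?_).trans_eq
    (Finset.card_product _ (Finset.univ : Finset Bool))
  · refine Finset.mem_product.2 ⟨?_, Finset.mem_univ _⟩
    rw [Finset.mem_coe, Finset.mem_filter_univ] at hr
    rw [Finset.mem_filter_univ]
    refine hr.trans (Finset.card_le_card fun i hi => ?_)
    rw [Finset.mem_filter] at hi ⊢
    exact ⟨hi.1, fun j => hi.2 j.castSucc⟩
  · rw [← Fin.snoc_init_self r, ← Fin.snoc_init_self r', (Prod.mk.inj h).1, (Prod.mk.inj h).2]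

theorem antitone_fillFraction (ω : ℕ → ℕ → Bool) (S : Finset ℕ) (t : ℕ) :
    Antitone (fillFraction ω S t) := by
  refine antitone_nat_of_succ_le fun k => ?_
  rw [fillFraction, fillFraction, pow_succ, div_le_div_iff₀ (by positivity) (by positivity),
    mul_comm (2 ^ k : ℝ) 2, ← mul_assoc]
  gcongr
  exact mod_cast fillCountFam_succ_le ω S t k

theorem fillupLevelFam_mem_Ico (h₁ : α ≤ fillFraction ω S t k₁) (h₂ : fillFraction ω S t k₂ < α) :
    fillupLevelFam α ω S t ∈ Set.Ico k₁ k₂ := by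
  have hlt : ∀ k, α ≤ fillFraction ω S t k → k < k₂ := fun k hk =>
    lt_of_not_ge fun hk₂ => (hk.trans (antitone_fillFraction ω S t hk₂)).not_gt h₂
  have hbdd : BddAbove {k | α ≤ fillFraction ω S t k} := ⟨k₂, fun k hk => (hlt k hk).le⟩
  exact ⟨le_csSup hbdd h₁, hlt _ (Nat.sSup_mem ⟨k₁, h₁⟩ hbdd)⟩

theorem two_le_card_of_fillFraction_pos (h : 0 < fillFraction ω S t k) : 2 ≤ S.card := by
  have hcount : 0 < fillCountFam ω S t k := by
    rw [fillFraction, div_pos_iff_of_pos_right (by positivity)] at h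
    exact mod_cast h
  obtain ⟨r, hr⟩ := Finset.card_pos.1 hcount
  exact (Finset.mem_filter.1 hr).2.trans (Finset.card_filter_le _ _)

theorem card_prefixFamily (ω : ℕ → ℕ → Bool) (n t : ℕ) :
    (prefixFamily ω n t).card = prefCount ω n t (firstBits (ω 0) t) := by
  rw [prefCount_eq_card_firstBits, prefixFamily]

theorem fillCountFam_prefixFamily (ω : ℕ → ℕ → Bool) (n t k : ℕ) :
    fillCountFam ω (prefixFamily ω n t) t k =
      ({r : Fin k → Bool | 2 ≤ prefCount ω n (t + k) (Fin.append (firstBits (ω 0) t) r)} :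
        Finset _).card := by
  simp only [fillCountFam, prefixFamily, prefCount, Finset.filter_filter, Fin.forall_fin_add,
    Fin.append_left, Fin.append_right, Fin.val_castAdd, Fin.val_natAdd, firstBits, funext_iff]

end FillFraction

section FillLevel

variable {p : ℝ} {ν : Measure (ℕ → ℕ → Bool)} {n t k : ℕ} {α a : ℝ}
  (hp : p ∈ Set.Ioo (0 : ℝ) 1) (hν : IIDBits p ν)
include hp hν

theorem IIDBits.measureReal_prefixEvent_inter_fillFraction_lt (hn : 1 ≤ n) (hα : α < 1)
    (v : Fin t → Bool) (ha : 2 ≤ a)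
    (hX : ({r : Fin k → Bool | logMass p n v - wordInfo p r < a} : Finset _).card ≤
      (1 - α) / 2 * 2 ^ k) :
    ν.real (prefixEvent 0 v ∩ {ω | fillFraction ω (prefixFamily ω n t) t k < α}) ≤
      wordProb p v * (16 / (1 - α) * 2 ^ (-a)) := by
  classical
  have := hν.1
  have hα : 0 < 1 - α := sub_pos.2 hα
  have hv := wordProb_pos hp v
  let E : (Fin k → Bool) → Set (ℕ → ℕ → Bool) := fun r =>
    prefixEvent 0 v ∩ {ω | prefCount ω n (t + k) (Fin.append v r) ≤ 1}
  have hE : ∀ r ∉ ({r : Fin k → Bool | logMass p n v - wordInfo p r < a} : Finset _),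
      ν.real (E r) ≤ wordProb p v * (8 * 2 ^ (-a)) := by
    intro r hr
    rw [Finset.mem_filter_univ, not_lt, ← logMass_append] at hr
    have hmean : 2 ^ a ≤ n * wordProb p (Fin.append v r) := by
      rw [mul_wordProb_eq_two_rpow_logMass hp hn]
      exact rpow_le_rpow_of_exponent_le one_le_two hr
    have hfour : (4 : ℝ) ≤ 2 ^ a :=
      calc (4 : ℝ) = 2 ^ (2 : ℝ) := by norm_num
        _ ≤ 2 ^ a := rpow_le_rpow_of_exponent_le one_le_two ha
    refine (hν.measureReal_prefixEvent_inter_prefCount_le_one hp v _ (hfour.trans hmean)).trans ?_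
    rw [rpow_neg zero_le_two, ← div_eq_mul_inv]
    gcongr
  have hsub : prefixEvent 0 v ∩ {ω | fillFraction ω (prefixFamily ω n t) t k < α} ⊆
      {ω | 2 * ((1 - α) / 2) * Fintype.card (Fin k → Bool) ≤
        (Finset.univ.filter fun r => ω ∈ E r).card} := by
    rintro ω ⟨hωv : firstBits (ω 0) t = v, hω : fillFraction ω _ t k < α⟩
    rw [fillFraction, fillCountFam_prefixFamily, hωv, div_lt_iff₀ (by positivity)] at hω
    have hcompl := congrArg (Nat.cast (R := ℝ)) (Finset.card_filter_add_card_filter_not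
      (s := (Finset.univ : Finset (Fin k → Bool)))
      fun r => 2 ≤ prefCount ω n (t + k) (Fin.append v r))
    have hempty : ∀ r, ω ∈ E r ↔ ¬ 2 ≤ prefCount ω n (t + k) (Fin.append v r) := by
      simp [E, prefixEvent, hωv]
    simp only [Nat.cast_add, Finset.card_univ, Fintype.card_fun, Fintype.card_fin,
      Fintype.card_bool, Nat.cast_pow, Nat.cast_ofNat] at hcompl
    simp only [Set.mem_ofPred_eq, hempty, Fintype.card_fun, Fintype.card_fin, Fintype.card_bool,
      Nat.cast_pow, Nat.cast_ofNat]
    linarith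
  refine (measureReal_mono hsub).trans ((measureReal_le_card_le_of_exceptional E (half_pos hα)
    (by simpa using hX) (by positivity) hE).trans_eq ?_)
  field_simp
  ring

theorem IIDBits.measureReal_prefixEvent_inter_le_fillFraction (hn : 1 ≤ n) (hα : 0 < α)
    (v : Fin t → Bool)
    (hX : ({r : Fin k → Bool | -a < logMass p n v - wordInfo p r} : Finset _).card ≤
      α / 2 * 2 ^ k) :
    ν.real (prefixEvent 0 v ∩ {ω | α ≤ fillFraction ω (prefixFamily ω n t) t k}) ≤
      wordProb p v * (2 / α * 2 ^ (-a)) := by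
  classical
  have := hν.1
  have hv := wordProb_pos hp v
  let E : (Fin k → Bool) → Set (ℕ → ℕ → Bool) := fun r =>
    prefixEvent 0 v ∩ {ω | 2 ≤ prefCount ω n (t + k) (Fin.append v r)}
  have hE : ∀ r ∉ ({r : Fin k → Bool | -a < logMass p n v - wordInfo p r} : Finset _),
      ν.real (E r) ≤ wordProb p v * 2 ^ (-a) := by
    intro r hr
    rw [Finset.mem_filter_univ, not_lt, ← logMass_append] at hr
    refine (hν.measureReal_prefixEvent_inter_two_le_prefCount hp n v _).trans ?_
    rw [mul_wordProb_eq_two_rpow_logMass hp hn]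
    gcongr
    exact one_le_two
  have hsub : prefixEvent 0 v ∩ {ω | α ≤ fillFraction ω (prefixFamily ω n t) t k} ⊆
      {ω | 2 * (α / 2) * Fintype.card (Fin k → Bool) ≤
        (Finset.univ.filter fun r => ω ∈ E r).card} := by
    rintro ω ⟨hωv : firstBits (ω 0) t = v, hω : α ≤ fillFraction ω _ t k⟩
    rw [fillFraction, fillCountFam_prefixFamily, hωv, le_div_iff₀ (by positivity)] at hω
    simpa [E, prefixEvent, hωv, mul_div_cancel₀] using hω
  refine (measureReal_mono hsub).trans ((measureReal_le_card_le_of_exceptional E (half_pos hα)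
    (by simpa using hX) (by positivity) hE).trans_eq ?_)
  field_simp

end FillLevel

/-! ### Negligible events -/

/-- The events `B n t`, for `n` strings and the prefix of length `t` of string `0`, are negligible
if, conditionally on that prefix, their probability is exponentially small in its logarithmic mass
as soon as the mass is large. -/
def Negligible (p : ℝ) (ν : Measure (ℕ → ℕ → Bool)) (B : ℕ → ℕ → Set (ℕ → ℕ → Bool)) : Prop :=
  ∃ γ > (0 : ℝ), ∀ᶠ x in atTop, ∀ n ≥ 1, ∀ (t : ℕ) (v : Fin t → Bool), logMass p n v = x →
    ν.real (prefixEvent 0 v ∩ B n t) ≤ wordProb p v * 2 ^ (-(γ * x))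

section Negligible

variable {p γ C : ℝ} {ν : Measure (ℕ → ℕ → Bool)} {B B' : ℕ → ℕ → Set (ℕ → ℕ → Bool)}

theorem Negligible.of_le_const_mul (hp : p ∈ Set.Ioo (0 : ℝ) 1) (hγ : 0 < γ)
    (h : ∀ᶠ x in atTop, ∀ n ≥ 1, ∀ (t : ℕ) (v : Fin t → Bool), logMass p n v = x →
      ν.real (prefixEvent 0 v ∩ B n t) ≤ wordProb p v * (C * 2 ^ (-(γ * x)))) :
    Negligible p ν B := by
  have hsmall : Tendsto (fun x : ℝ => C * 2 ^ (-(γ / 2 * x))) atTop (nhds 0) := by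
    simpa using (tendsto_two_rpow_neg_mul_atTop (half_pos hγ)).const_mul C
  refine ⟨γ / 2, half_pos hγ, ?_⟩
  filter_upwards [h, hsmall.eventually_le_const one_pos] with x hx hC n hn t v hv
  have hsplit : (2 : ℝ) ^ (-(γ * x)) = 2 ^ (-(γ / 2 * x)) * 2 ^ (-(γ / 2 * x)) := by
    rw [← rpow_add two_pos]
    ring_nf
  refine (hx n hn t v hv).trans (mul_le_mul_of_nonneg_left ?_ (wordProb_pos hp v).le)
  rw [hsplit, ← mul_assoc]
  exact mul_le_of_le_one_left (by positivity) hC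

theorem Negligible.mono [IsFiniteMeasure ν] (hB : Negligible p ν B)
    (h : ∀ᶠ x in atTop, ∀ n t ω, pathMass p n (ω 0) t = x → ω ∈ B' n t → ω ∈ B n t) :
    Negligible p ν B' := by
  obtain ⟨γ, hγ, hB⟩ := hB
  refine ⟨γ, hγ, ?_⟩
  filter_upwards [hB, h] with x hx hsub n hn t v hv
  refine (measureReal_mono ?_).trans (hx n hn t v hv)
  rintro ω ⟨hωv : firstBits (ω 0) t = v, hω⟩
  exact ⟨hωv, hsub n t ω (by rw [pathMass, hωv, hv]) hω⟩

theorem Negligible.union (hp : p ∈ Set.Ioo (0 : ℝ) 1) (hB : Negligible p ν B)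
    (hB' : Negligible p ν B') : Negligible p ν fun n t => B n t ∪ B' n t := by
  obtain ⟨γ, hγ, hB⟩ := hB
  obtain ⟨γ', hγ', hB'⟩ := hB'
  refine Negligible.of_le_const_mul (C := 2) hp (lt_min hγ hγ') ?_
  filter_upwards [hB, hB', eventually_ge_atTop 0] with x hx hx' hx₀ n hn t v hv
  have hexp : ∀ c, min γ γ' ≤ c → (2 : ℝ) ^ (-(c * x)) ≤ 2 ^ (-(min γ γ' * x)) := fun c hc =>
    rpow_le_rpow_of_exponent_le one_le_two (neg_le_neg (mul_le_mul_of_nonneg_right hc hx₀))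
  have hv₀ := wordProb_pos hp v
  rw [Set.inter_union_distrib_left]
  calc ν.real (prefixEvent 0 v ∩ B n t ∪ prefixEvent 0 v ∩ B' n t)
      ≤ wordProb p v * 2 ^ (-(γ * x)) + wordProb p v * 2 ^ (-(γ' * x)) :=
        (measureReal_union_le _ _).trans (add_le_add (hx n hn t v hv) (hx' n hn t v hv))
    _ ≤ wordProb p v * 2 ^ (-(min γ γ' * x)) + wordProb p v * 2 ^ (-(min γ γ' * x)) := by
        exact add_le_add (mul_le_mul_of_nonneg_left (hexp γ (min_le_left _ _)) hv₀.le)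
          (mul_le_mul_of_nonneg_left (hexp γ' (min_le_right _ _)) hv₀.le)
    _ = wordProb p v * (2 * 2 ^ (-(min γ γ' * x))) := by ring

end Negligible

section Entropy

/-- The entropy, in binary units, of a bit. -/
noncomputable def bitEntropy (p : ℝ) : ℝ := ∑ b, bitProb p b * bitInfo p b

/-- The information content of a bit averaged over both values with equal weights, the typical
information per letter of a uniformly random word. -/
noncomputable def meanInfo (p : ℝ) : ℝ := (∑ b, bitInfo p b) / 2

variable {p : ℝ}

theorem sum_bitProb (p : ℝ) : ∑ b, bitProb p b = 1 := by
  simp [bitProb]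

theorem bitEntropy_eq (p : ℝ) :
    bitEntropy p = -(p * logb 2 p) - (1 - p) * logb 2 (1 - p) := by
  simp only [bitEntropy, bitInfo, bitProb, Fintype.sum_bool, if_true, Bool.false_eq_true, if_false]
  ring

theorem meanInfo_eq (hp : p ∈ Set.Ioo (0 : ℝ) 1) :
    meanInfo p = logb 2 (1 / √(p * (1 - p))) := by
  have hq : 0 < 1 - p := sub_pos.2 hp.2
  rw [logb, log_div one_ne_zero (sqrt_ne_zero'.2 (mul_pos hp.1 hq)),
    log_sqrt (mul_pos hp.1 hq).le, log_mul hp.1.ne' hq.ne', log_one]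
  simp only [meanInfo, bitInfo, bitProb, Fintype.sum_bool, if_true, Bool.false_eq_true, if_false,
    logb]
  ring

theorem bitInfo_pos (hp : p ∈ Set.Ioo (0 : ℝ) 1) (b : Bool) : 0 < bitInfo p b :=
  (minInfo_pos hp).trans_le (minInfo_le_bitInfo b)

theorem meanInfo_pos (hp : p ∈ Set.Ioo (0 : ℝ) 1) : 0 < meanInfo p :=
  half_pos (Finset.sum_pos (fun b _ => bitInfo_pos hp b) Finset.univ_nonempty)

theorem bitEntropy_pos (hp : p ∈ Set.Ioo (0 : ℝ) 1) : 0 < bitEntropy p :=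
  Finset.sum_pos (fun b _ => mul_pos (bitProb_pos hp b) (bitInfo_pos hp b)) Finset.univ_nonempty

/- `bitEntropy - meanInfo` is twice the covariance, under equal weights, of probability and
information, and the latter decreases with the former. -/
theorem bitEntropy_lt_meanInfo (hp : p ∈ Set.Ioo (0 : ℝ) 1) (hp2 : p ≠ 1 / 2) :
    bitEntropy p < meanInfo p := by
  have hcov : bitEntropy p - meanInfo p = (2 * p - 1) * (logb 2 (1 - p) - logb 2 p) / 2 := by
    simp only [bitEntropy, meanInfo, bitInfo, bitProb, Fintype.sum_bool, if_true,
      Bool.false_eq_true, if_false]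
    ring
  suffices (2 * p - 1) * (logb 2 (1 - p) - logb 2 p) < 0 by linarith
  rcases hp2.lt_or_gt with hlt | hgt
  · exact mul_neg_of_neg_of_pos (by linarith)
      (sub_pos.2 (logb_lt_logb one_lt_two hp.1 (by linarith)))
  · exact mul_neg_of_pos_of_neg (by linarith)
      (sub_neg.2 (logb_lt_logb one_lt_two (sub_pos.2 hp.2) (by linarith)))

theorem one_sub_bitEntropy_div_meanInfo_mem_Ioo (hp : p ∈ Set.Ioo (0 : ℝ) 1) (hp2 : p ≠ 1 / 2) :
    1 - bitEntropy p / meanInfo p ∈ Set.Ioo (0 : ℝ) 1 :=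
  ⟨sub_pos.2 ((div_lt_one (meanInfo_pos hp)).2 (bitEntropy_lt_meanInfo hp hp2)),
    sub_lt_self 1 (div_pos (bitEntropy_pos hp) (meanInfo_pos hp))⟩

end Entropy

section NegligibleEvents

theorem prefixEvent_inter_setOf_pathMass {p : ℝ} (P : (ℕ → ℕ → Bool) → ℝ → Prop) (n : ℕ) {t : ℕ}
    (v : Fin t → Bool) :
    prefixEvent 0 v ∩ {ω | P ω (pathMass p n (ω 0) t)} =
      prefixEvent 0 v ∩ {ω | P ω (logMass p n v)} := by
  ext ω
  refine and_congr_right fun hω : firstBits (ω 0) t = v => ?_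
  simp only [Set.mem_ofPred_eq, pathMass, hω]

variable {p : ℝ} {ν : Measure (ℕ → ℕ → Bool)} {α c : ℝ}
  (hp : p ∈ Set.Ioo (0 : ℝ) 1) (hν : IIDBits p ν)
include hp hν

theorem IIDBits.exists_measureReal_prefixEvent_inter_sum_nonneg_le {y : Bool → ℝ}
    (hy : ∑ b, bitProb p b * y b < 0) :
    ∃ θ > (0 : ℝ), ∀ (t k : ℕ) (v : Fin t → Bool),
      ν.real (prefixEvent 0 v ∩ {ω | 0 ≤ ∑ j : Fin k, y (ω 0 (t + j))}) ≤
        wordProb p v * 2 ^ (-(θ * k)) := by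
  obtain ⟨θ, hθ, hle⟩ :=
    exists_sum_prod_le_two_rpow (fun b => (bitProb_pos hp b).le) (sum_bitProb p) hy
  refine ⟨θ, hθ, fun t k v => ?_⟩
  have := hν.1
  have hsub : prefixEvent 0 v ∩ {ω | 0 ≤ ∑ j : Fin k, y (ω 0 (t + j))} ⊆
      ⋃ r ∈ ({r : Fin k → Bool | 0 ≤ ∑ j, y (r j)} : Finset _), prefixEvent 0 (Fin.append v r) := by
    rintro ω ⟨hωv, hω : 0 ≤ ∑ j : Fin k, y (ω 0 (t + j))⟩
    refine Set.mem_biUnion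
      (Finset.mem_filter.2 ⟨Finset.mem_univ fun j : Fin k => ω 0 (t + j), hω⟩) ?_
    rw [prefixEvent_append]
    exact ⟨hωv, fun _ => rfl⟩
  calc ν.real (prefixEvent 0 v ∩ {ω | 0 ≤ ∑ j : Fin k, y (ω 0 (t + j))})
      ≤ ∑ r : Fin k → Bool with 0 ≤ ∑ j, y (r j), ν.real (prefixEvent 0 (Fin.append v r)) :=
        (measureReal_mono hsub (measure_ne_top _ _)).trans (measureReal_biUnion_finset_le _ _)
    _ = wordProb p v * ∑ r : Fin k → Bool with 0 ≤ ∑ j, y (r j), wordProb p r := by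
        simp only [hν.measureReal_prefixEvent hp, wordProb_append, Finset.mul_sum]
    _ ≤ wordProb p v * 2 ^ (-(θ * k)) := mul_le_mul_of_nonneg_left (hle k) (wordProb_pos hp v).le

theorem IIDBits.negligible_sum_nonneg {y : Bool → ℝ} (hy : ∑ b, bitProb p b * y b < 0) (hc : 0 < c)
    {k : ℝ → ℕ} (hk : ∀ x, c * x - 1 ≤ k x) :
    Negligible p ν fun n t =>
      {ω | 0 ≤ ∑ j : Fin (k (pathMass p n (ω 0) t)), y (ω 0 (t + j))} := by
  obtain ⟨θ, hθ, hle⟩ := hν.exists_measureReal_prefixEvent_inter_sum_nonneg_le hp hy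
  refine Negligible.of_le_const_mul (C := 2 ^ θ) hp (mul_pos hθ hc)
    (Eventually.of_forall fun x n _ t v hv => ?_)
  rw [prefixEvent_inter_setOf_pathMass fun ω x => 0 ≤ ∑ j : Fin (k x), y (ω 0 (t + j)), hv]
  refine (hle t (k x) v).trans ?_
  rw [← rpow_add two_pos]
  refine mul_le_mul_of_nonneg_left (rpow_le_rpow_of_exponent_le one_le_two ?_)
    (wordProb_pos hp v).le
  have := mul_le_mul_of_nonneg_left (hk x) hθ.le
  linarith

theorem IIDBits.negligible_fillFraction_lt (hα : α < 1) (hc : 0 < c) (hcL : c * meanInfo p < 1) :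
    Negligible p ν fun n t =>
      {ω | fillFraction ω (prefixFamily ω n t) t ⌊c * pathMass p n (ω 0) t⌋₊ < α} := by
  obtain ⟨δ, hδ, hδL⟩ := exists_between (sub_pos.2 hcL)
  let y : Bool → ℝ := fun b => bitInfo p b - (1 - δ) / c
  have hy : ∑ b, y b < 0 := by
    have hL : meanInfo p < (1 - δ) / c := by rw [lt_div_iff₀ hc]; linarith
    simp only [meanInfo, y, Finset.sum_sub_distrib, Finset.sum_const, Finset.card_univ,
      Fintype.card_bool, nsmul_eq_mul, Nat.cast_ofNat] at hL ⊢
    linarith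
  have hfloor_tendsto : Tendsto (fun x : ℝ => ⌊c * x⌋₊) atTop atTop :=
    tendsto_nat_floor_atTop.comp (tendsto_id.const_mul_atTop hc)
  have hrare := hfloor_tendsto.eventually
    (eventually_card_sum_nonneg_le hy (half_pos (sub_pos.2 hα)))
  refine Negligible.of_le_const_mul (C := 16 / (1 - α)) hp hδ ?_
  filter_upwards [hrare, (tendsto_id.const_mul_atTop hδ).eventually_ge_atTop 2,
    eventually_ge_atTop 0] with x hx hδx hx₀ n hn t v hv
  rw [prefixEvent_inter_setOf_pathMass
    fun ω x => fillFraction ω (prefixFamily ω n t) t ⌊c * x⌋₊ < α, hv]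
  refine hν.measureReal_prefixEvent_inter_fillFraction_lt hp hn hα v hδx (le_trans ?_ hx)
  rw [hv]
  gcongr with r
  intro hr
  have hfloor : (1 - δ) / c * ⌊c * x⌋₊ ≤ (1 - δ) * x := by
    rw [div_mul_eq_mul_div, div_le_iff₀ hc, mul_assoc, mul_comm x]
    gcongr
    exacts [by linarith [mul_pos hc (meanInfo_pos hp)], Nat.floor_le (by positivity)]
  rw [wordInfo] at hr
  simp only [y, Finset.sum_sub_distrib, Finset.sum_const, Finset.card_univ, Fintype.card_fin,
    nsmul_eq_mul]
  linarith

theorem IIDBits.negligible_le_fillFraction (hα : 0 < α) (hc : 0 < c) (hcL : 1 < c * meanInfo p) :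
    Negligible p ν fun n t =>
      {ω | α ≤ fillFraction ω (prefixFamily ω n t) t ⌊c * pathMass p n (ω 0) t⌋₊} := by
  obtain ⟨η, hη, hηL⟩ := exists_between hcL
  obtain ⟨δ, hδ, hδη⟩ := exists_between (sub_pos.2 hη)
  let y : Bool → ℝ := fun b => η / c - bitInfo p b
  have hy : ∑ b, y b < 0 := by
    have hL : η / c < meanInfo p := by rw [div_lt_iff₀ hc]; linarith
    simp only [meanInfo, y, Finset.sum_sub_distrib, Finset.sum_const, Finset.card_univ,
      Fintype.card_bool, nsmul_eq_mul, Nat.cast_ofNat] at hL ⊢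
    linarith
  have hfloor_tendsto : Tendsto (fun x : ℝ => ⌊c * x⌋₊) atTop atTop :=
    tendsto_nat_floor_atTop.comp (tendsto_id.const_mul_atTop hc)
  have hrare := hfloor_tendsto.eventually
    (eventually_card_sum_nonneg_le hy (half_pos hα))
  refine Negligible.of_le_const_mul (C := 2 / α) hp hδ ?_
  filter_upwards [hrare, (tendsto_id.const_mul_atTop (sub_pos.2 hδη)).eventually_ge_atTop (η / c)]
    with x hx hxη n hn t v hv
  rw [prefixEvent_inter_setOf_pathMass
    fun ω x => α ≤ fillFraction ω (prefixFamily ω n t) t ⌊c * x⌋₊, hv]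
  refine hν.measureReal_prefixEvent_inter_le_fillFraction hp hn hα v (le_trans ?_ hx)
  rw [hv]
  gcongr with r
  intro hr
  have hfloor : η * x - η / c ≤ η / c * ⌊c * x⌋₊ := by
    have := Nat.sub_one_lt_floor (c * x)
    calc η * x - η / c = η / c * (c * x - 1) := by field_simp
      _ ≤ η / c * ⌊c * x⌋₊ := by gcongr
  rw [wordInfo] at hr
  simp only [y, Finset.sum_sub_distrib, Finset.sum_const, Finset.card_univ, Fintype.card_fin,
    nsmul_eq_mul]
  simp only [id_eq] at hxη
  linarith

end NegligibleEvents

/-! ### Regular level-compression steps -/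

/-- The event that the level-compression step taken from offset `t` is regular: the family is not
yet reduced to string `0`, and the step multiplies the logarithmic mass by a factor between `κ₁`
and `κ₂`. -/
def regularStep (p α κ₁ κ₂ : ℝ) (n t : ℕ) : Set (ℕ → ℕ → Bool) :=
  {ω | 2 ≤ (prefixFamily ω n t).card ∧
    pathMass p n (ω 0) (t + fillupLevelFam α ω (prefixFamily ω n t) t + 1) ∈
      Set.Icc (κ₁ * pathMass p n (ω 0) t) (κ₂ * pathMass p n (ω 0) t)}

section RegularStep

variable {p α κ₁ κ₂ c₁ c₂ h₁ h₂ : ℝ} {n t : ℕ} {ω : ℕ → ℕ → Bool}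

theorem mem_regularStep (hp : p ∈ Set.Ioo (0 : ℝ) 1) (hα : 0 < α) (hc₂ : 0 ≤ c₂)
    (hh₁ : 0 ≤ h₁) (hh₂ : 0 ≤ h₂) (hx : 0 ≤ pathMass p n (ω 0) t)
    (hlow : α ≤ fillFraction ω (prefixFamily ω n t) t ⌊c₁ * pathMass p n (ω 0) t⌋₊)
    (hhigh : fillFraction ω (prefixFamily ω n t) t ⌊c₂ * pathMass p n (ω 0) t⌋₊ < α)
    (hslow : ∑ j : Fin (⌊c₁ * pathMass p n (ω 0) t⌋₊ + 1), (h₁ - bitInfo p (ω 0 (t + j))) < 0)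
    (hfast : ∑ j : Fin ⌊c₂ * pathMass p n (ω 0) t⌋₊, (bitInfo p (ω 0 (t + j)) - h₂) < 0) :
    ω ∈ regularStep p α (1 - h₂ * c₂) (1 - h₁ * c₁) n t := by
  obtain ⟨hF₁, hF₂⟩ := fillupLevelFam_mem_Ico hlow hhigh
  refine ⟨two_le_card_of_fillFraction_pos (hα.trans_le hlow), ?_, ?_⟩
  · refine le_trans ?_ (antitone_pathMass hp n (ω 0) (Nat.add_le_add_left hF₂ t))
    rw [Finset.sum_sub_distrib, Finset.sum_const, Finset.card_univ, Fintype.card_fin,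
      nsmul_eq_mul] at hfast
    have hfloor := mul_le_mul_of_nonneg_left (Nat.floor_le (mul_nonneg hc₂ hx)) hh₂
    rw [pathMass_add]
    linarith
  · refine (antitone_pathMass hp n (ω 0)
      (Nat.add_le_add_left (Nat.succ_le_succ hF₁) t)).trans ?_
    rw [Finset.sum_sub_distrib, Finset.sum_const, Finset.card_univ, Fintype.card_fin,
      nsmul_eq_mul, Nat.cast_succ] at hslow
    have hfloor := mul_le_mul_of_nonneg_left
      (Nat.lt_floor_add_one (c₁ * pathMass p n (ω 0) t)).le hh₁
    rw [pathMass_add]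
    linarith

theorem IIDBits.negligible_compl_regularStep {ν : Measure (ℕ → ℕ → Bool)}
    (hp : p ∈ Set.Ioo (0 : ℝ) 1) (hν : IIDBits p ν) (hα : α ∈ Set.Ioo (0 : ℝ) 1)
    (hκ₁ : κ₁ < 1 - bitEntropy p / meanInfo p)
    (hκ₂ : κ₂ ∈ Set.Ioo (1 - bitEntropy p / meanInfo p) 1) :
    Negligible p ν fun n t => (regularStep p α κ₁ κ₂ n t)ᶜ := by
  have := hν.1
  have hL := meanInfo_pos hp
  have hH := bitEntropy_pos hp
  have hκ₂_pos : 0 < 1 - κ₂ := sub_pos.2 hκ₂.2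
  obtain ⟨h₁, hh₁, hh₁H⟩ := exists_between ((lt_div_iff₀ hL).1 (sub_lt_comm.1 hκ₂.1))
  obtain ⟨h₂, hHh₂, hh₂⟩ := exists_between ((div_lt_iff₀ hL).1 (lt_sub_comm.1 hκ₁))
  have hh₁_pos : 0 < h₁ := (mul_pos hκ₂_pos hL).trans hh₁
  have hh₂_pos : 0 < h₂ := hH.trans hHh₂
  have hκ₁_pos : 0 < 1 - κ₁ := (mul_pos_iff_of_pos_right hL).1 (hh₂_pos.trans hh₂)
  have hc₁ : 0 < (1 - κ₂) / h₁ := div_pos hκ₂_pos hh₁_pos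
  have hc₂ : 0 < (1 - κ₁) / h₂ := div_pos hκ₁_pos hh₂_pos
  have hlow := hν.negligible_fillFraction_lt hp hα.2 hc₁
    (by rwa [div_mul_eq_mul_div, div_lt_one hh₁_pos])
  have hhigh := hν.negligible_le_fillFraction hp hα.1 hc₂
    (by rwa [div_mul_eq_mul_div, one_lt_div hh₂_pos])
  have hslow := hν.negligible_sum_nonneg hp (y := fun b => h₁ - bitInfo p b)
    (by simpa only [mul_sub, Finset.sum_sub_distrib, ← Finset.sum_mul, sum_bitProb, one_mul,
      sub_neg, bitEntropy] using hh₁H) hc₁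
    (k := fun x => ⌊(1 - κ₂) / h₁ * x⌋₊ + 1) fun x => by
      push_cast; linarith [Nat.sub_one_lt_floor ((1 - κ₂) / h₁ * x)]
  have hfast := hν.negligible_sum_nonneg hp (y := fun b => bitInfo p b - h₂)
    (by simpa only [mul_sub, Finset.sum_sub_distrib, ← Finset.sum_mul, sum_bitProb, one_mul,
      sub_neg, bitEntropy] using hHh₂) hc₂
    (k := fun x => ⌊(1 - κ₁) / h₂ * x⌋₊) fun x => (Nat.sub_one_lt_floor _).le
  refine ((hlow.union hp hhigh).union hp (hslow.union hp hfast)).mono ?_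
  filter_upwards [eventually_ge_atTop 0] with x hx n t ω hxω hω
  contrapose! hω
  simp only [Set.mem_union, Set.mem_ofPred_eq, not_or, not_le, not_lt] at hω
  simpa [mul_div_cancel₀, hh₁_pos.ne', hh₂_pos.ne'] using mem_regularStep hp hα.1 hc₂.le hh₁_pos.le
    hh₂_pos.le (hxω.symm ▸ hx) hω.1.1 hω.1.2 hω.2.1 hω.2.2

end RegularStep

section AllOffsets

variable {p : ℝ} {ν : Measure (ℕ → ℕ → Bool)} {n : ℕ} (hp : p ∈ Set.Ioo (0 : ℝ) 1)
  (hν : IIDBits p ν)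
include hp hν

theorem IIDBits.integral_firstBits {t : ℕ} (g : (Fin t → Bool) → ℝ) :
    ∫ ω, g (firstBits (ω 0) t) ∂ν = ∑ v, wordProb p v * g v := by
  have := hν.1
  rw [← integral_map (f := g) (measurable_firstBits 0 t).aemeasurable
    (measurable_of_finite g).aestronglyMeasurable, integral_fintype (Integrable.of_finite)]
  refine Finset.sum_congr rfl fun v _ => ?_
  rw [map_measureReal_apply (measurable_firstBits 0 t) (measurableSet_singleton v), smul_eq_mul,
    ← hν.measureReal_prefixEvent hp 0 v]
  rfl

theorem IIDBits.measure_iUnion_le_ofReal {E : ℕ → Set (ℕ → ℕ → Bool)} {M : ℝ}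
    (g : ∀ t, (Fin t → Bool) → ℝ)
    (hE : ∀ t (v : Fin t → Bool), ν.real (prefixEvent 0 v ∩ E t) ≤ wordProb p v * g t v)
    (hg : ∀ T u, ∑ t ∈ Finset.range T, g t (firstBits u t) ≤ M) :
    ν (⋃ t, E t) ≤ ENNReal.ofReal M := by
  have := hν.1
  have hint : ∀ t, Integrable (fun ω : ℕ → ℕ → Bool => g t (firstBits (ω 0) t)) ν := fun t =>
    Integrable.of_finite.comp_measurable (measurable_firstBits 0 t)
  have hmean : ∀ t, ν.real (E t) ≤ ∫ ω, g t (firstBits (ω 0) t) ∂ν := by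
    intro t
    have hcover : E t ⊆ ⋃ v ∈ (Finset.univ : Finset (Fin t → Bool)), prefixEvent 0 v ∩ E t :=
      fun ω hω => Set.mem_biUnion (Finset.mem_univ (firstBits (ω 0) t)) ⟨rfl, hω⟩
    rw [hν.integral_firstBits hp]
    exact ((measureReal_mono hcover (measure_ne_top _ _)).trans
      (measureReal_biUnion_finset_le _ _)).trans (Finset.sum_le_sum fun v _ => hE t v)
  refine (measure_iUnion_le E).trans (ENNReal.tsum_le_of_sum_range_le fun T => ?_)
  calc ∑ t ∈ Finset.range T, ν (E t) = ENNReal.ofReal (∑ t ∈ Finset.range T, ν.real (E t)) := by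
        simp [ENNReal.ofReal_sum_of_nonneg]
    _ ≤ ENNReal.ofReal (∫ ω, ∑ t ∈ Finset.range T, g t (firstBits (ω 0) t) ∂ν) := by
        rw [integral_finsetSum _ fun t _ => hint t]
        exact ENNReal.ofReal_le_ofReal (Finset.sum_le_sum fun t _ => hmean t)
    _ ≤ ENNReal.ofReal M := by
        refine ENNReal.ofReal_le_ofReal ((integral_mono (integrable_finsetSum _ fun t _ => hint t)
          (integrable_const M) fun ω => hg T (ω 0)).trans_eq ?_)
        simp

end AllOffsets

theorem eventually_ofReal_two_rpow_neg_mul_div_le {γ : ℝ} (hγ : 0 < γ) (d : ℝ)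
    {e : ENNReal} (he : 0 < e) :
    ∀ᶠ W in atTop, ENNReal.ofReal ((2 : ℝ) ^ (-(γ * W)) / d) ≤ e := by
  have hlim := ENNReal.tendsto_ofReal ((tendsto_two_rpow_neg_mul_atTop hγ).div_const d)
  rw [zero_div, ENNReal.ofReal_zero] at hlim
  exact hlim.eventually_le_const he

section SeparatedOffsets

variable {p γ c W : ℝ} {ν : Measure (ℕ → ℕ → Bool)} (hp : p ∈ Set.Ioo (0 : ℝ) 1)
  (hν : IIDBits p ν)
include hp hν

theorem IIDBits.measure_exists_le_ofReal {E : ℕ → Set (ℕ → ℕ → Bool)} (hγ : 0 < γ) (hc : 0 < c)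
    (z : ∀ t, (Fin t → Bool) → ℝ)
    (hsep : ∀ u t t', t ≠ t' → c ≤ |z t (firstBits u t) - z t' (firstBits u t')|)
    (hE : ∀ t (v : Fin t → Bool), W ≤ z t v →
      ν.real (prefixEvent 0 v ∩ E t) ≤ wordProb p v * 2 ^ (-(γ * z t v))) :
    ν {ω | ∃ t, W ≤ z t (firstBits (ω 0) t) ∧ ω ∈ E t} ≤
      ENNReal.ofReal (2 ^ (-(γ * W)) / (1 - 2 ^ (-(γ * c)))) := by
  have := hν.1
  rw [Set.ofPred_exists]
  refine hν.measure_iUnion_le_ofReal hp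
    (fun t v => if W ≤ z t v then 2 ^ (-(γ * z t v)) else 0) (fun t v => ?_) fun T u => ?_
  · split_ifs with hW
    · exact (measureReal_mono (Set.inter_subset_inter_right _ fun ω hω => hω.2)).trans (hE t v hW)
    · have hempty : prefixEvent 0 v ∩ {ω | W ≤ z t (firstBits (ω 0) t) ∧ ω ∈ E t} = ∅ := by
        rw [Set.eq_empty_iff_forall_notMem]
        rintro ω ⟨hωv : firstBits (ω 0) t = v, hω, -⟩
        exact hW (hωv ▸ hω)
      rw [hempty, measureReal_empty, mul_zero]
  · rw [← Finset.sum_filter]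
    exact sum_two_rpow_neg_le_of_separated hγ hc (fun t _ t' _ h => hsep u t t' h)
      fun t ht => (Finset.mem_filter.1 ht).2

theorem IIDBits.eventually_measure_exists_le {B : ℕ → ℕ → Set (ℕ → ℕ → Bool)}
    (hB : Negligible p ν B) {e : ENNReal} (he : 0 < e) :
    ∀ᶠ W in atTop, ∀ n ≥ 1, ν {ω | ∃ t, W ≤ pathMass p n (ω 0) t ∧ ω ∈ B n t} ≤ e := by
  obtain ⟨γ, hγ, hB⟩ := hB
  filter_upwards [eventually_forall_ge_atTop.2 hB, eventually_ofReal_two_rpow_neg_mul_div_le hγ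
    (1 - 2 ^ (-(γ * minInfo p))) he] with W hW hWe n hn
  refine (hν.measure_exists_le_ofReal hp hγ (minInfo_pos hp) (fun t v => logMass p n v)
    (fun u t t' => minInfo_le_abs_pathMass_sub hp n u) fun t v hv => ?_).trans hWe
  exact hW _ hv n hn t v rfl

theorem IIDBits.eventually_measure_exists_two_le_card_le {e : ENNReal} (he : 0 < e) :
    ∀ᶠ W in atTop, ∀ n ≥ 1,
      ν {ω | ∃ t, pathMass p n (ω 0) t ≤ -W ∧ 2 ≤ (prefixFamily ω n t).card} ≤ e := by
  have := hν.1
  filter_upwards [eventually_ofReal_two_rpow_neg_mul_div_le one_pos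
    (1 - 2 ^ (-(1 * minInfo p))) he] with W hWe n hn
  refine (measure_mono ?_).trans ((hν.measure_exists_le_ofReal hp one_pos (minInfo_pos hp)
    (E := fun t => {ω | 2 ≤ (prefixFamily ω n t).card}) (fun t v => -logMass p n v)
    (fun u t t' h => ?_) fun t v _ => ?_).trans hWe)
  · rintro ω ⟨t, ht, hω⟩
    exact ⟨t, le_neg.1 ht, hω⟩
  · rw [neg_sub_neg, abs_sub_comm]
    exact minInfo_le_abs_pathMass_sub hp n u h
  · rw [one_mul, neg_neg, ← mul_wordProb_eq_two_rpow_logMass hp hn]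
    refine (measureReal_mono ?_).trans (hν.measureReal_prefixEvent_inter_two_le_prefCount hp n v v)
    rintro ω ⟨hωv : firstBits (ω 0) t = v, hω : 2 ≤ (prefixFamily ω n t).card⟩
    exact ⟨hωv, by rwa [card_prefixFamily, hωv] at hω⟩

end SeparatedOffsets

/-- The outcomes regular at scale `W`: along string `0`, every level-compression step that starts
from a logarithmic mass of at least `W` is regular, and string `0` is alone in its family once the
logarithmic mass is at most `-W`. -/
def regularOutcomes (p α κ₁ κ₂ W : ℝ) (n : ℕ) : Set (ℕ → ℕ → Bool) :=
  {ω | (∀ t, W ≤ pathMass p n (ω 0) t → ω ∈ regularStep p α κ₁ κ₂ n t) ∧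
    ∀ t, pathMass p n (ω 0) t ≤ -W → (prefixFamily ω n t).card ≤ 1}

theorem IIDBits.exists_measure_compl_regularOutcomes_le {p α κ₁ κ₂ : ℝ}
    {ν : Measure (ℕ → ℕ → Bool)} (hp : p ∈ Set.Ioo (0 : ℝ) 1) (hν : IIDBits p ν)
    (hα : α ∈ Set.Ioo (0 : ℝ) 1) (hκ₁ : κ₁ < 1 - bitEntropy p / meanInfo p)
    (hκ₂ : κ₂ ∈ Set.Ioo (1 - bitEntropy p / meanInfo p) 1) {e : ENNReal} (he : 0 < e) :
    ∃ W ≥ 1, ∀ n ≥ 1, ν (regularOutcomes p α κ₁ κ₂ W n)ᶜ ≤ e := by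
  have hstep := hν.eventually_measure_exists_le hp
    (hν.negligible_compl_regularStep hp hα hκ₁ hκ₂) (ENNReal.half_pos he.ne')
  have halone := hν.eventually_measure_exists_two_le_card_le hp (ENNReal.half_pos he.ne')
  obtain ⟨W, ⟨hstep, halone⟩, hW⟩ := ((hstep.and halone).and (eventually_ge_atTop 1)).exists
  refine ⟨W, hW, fun n hn => ?_⟩
  calc ν (regularOutcomes p α κ₁ κ₂ W n)ᶜ
      ≤ ν ({ω | ∃ t, W ≤ pathMass p n (ω 0) t ∧ ω ∈ (regularStep p α κ₁ κ₂ n t)ᶜ} ∪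
          {ω | ∃ t, pathMass p n (ω 0) t ≤ -W ∧ 2 ≤ (prefixFamily ω n t).card}) := by
        refine measure_mono fun ω hω => ?_
        contrapose! hω
        simpa [regularOutcomes, Nat.lt_succ_iff] using hω
    _ ≤ e / 2 + e / 2 := (measure_union_le _ _).trans (add_le_add (hstep n hn) (halone n hn))
    _ = e := ENNReal.add_halves e

/-! ### The depth on regular outcomes -/

/-- The number of bits consumed by the first `m` level-compression steps along string `0`. -/
noncomputable def lcOffset (α : ℝ) (ω : ℕ → ℕ → Bool) (n m : ℕ) : ℕ := (lcIter α ω n m).2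

section LevelCompression

variable {α : ℝ} {ω : ℕ → ℕ → Bool} {n m : ℕ}

theorem prefixFamily_zero (ω : ℕ → ℕ → Bool) (n : ℕ) :
    prefixFamily ω n 0 = Finset.range n :=
  Finset.filter_true_of_mem fun _ _ => Subsingleton.elim _ _

theorem prefixFamily_add (ω : ℕ → ℕ → Bool) (n t k : ℕ) :
    prefixFamily ω n (t + k) =
      (prefixFamily ω n t).filter fun i => ∀ j < k, ω i (t + j) = ω 0 (t + j) := by
  ext i
  simp only [prefixFamily, firstBits, funext_iff, Finset.mem_filter, Fin.forall_fin_add,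
    Fin.val_castAdd, Fin.val_natAdd, and_assoc]
  simp only [Fin.forall_iff]

theorem lcIter_fst (α : ℝ) (ω : ℕ → ℕ → Bool) (n m : ℕ) :
    (lcIter α ω n m).1 = prefixFamily ω n (lcOffset α ω n m) := by
  induction m with
  | zero => exact (prefixFamily_zero ω n).symm
  | succ m ih =>
    simp only [lcIter, lcStep, lcOffset] at ih ⊢
    rw [ih, add_assoc, prefixFamily_add]

theorem lcOffset_succ (α : ℝ) (ω : ℕ → ℕ → Bool) (n m : ℕ) :
    lcOffset α ω n (m + 1) = lcOffset α ω n m +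
      fillupLevelFam α ω (prefixFamily ω n (lcOffset α ω n m)) (lcOffset α ω n m) + 1 := by
  rw [← lcIter_fst]
  rfl

theorem lcOffset_add_le (α : ℝ) (ω : ℕ → ℕ → Bool) (n m j : ℕ) :
    lcOffset α ω n m + j ≤ lcOffset α ω n (m + j) := by
  induction j with
  | zero => rfl
  | succ j ih =>
    rw [← add_assoc m, lcOffset_succ]
    lia

theorem lcDepth_le (h : (prefixFamily ω n (lcOffset α ω n m)).card ≤ 1) : lcDepth α ω n ≤ m :=
  Nat.sInf_le (by rwa [Set.mem_ofPred_eq, lcIter_fst])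

theorem lt_lcDepth (h : ∀ k ≤ m, 2 ≤ (prefixFamily ω n (lcOffset α ω n k)).card)
    (hex : ∃ k, (prefixFamily ω n (lcOffset α ω n k)).card ≤ 1) : m < lcDepth α ω n := by
  simp only [← lcIter_fst] at h hex
  refine lt_of_not_ge fun hle => ?_
  have hmem : (lcIter α ω n (lcDepth α ω n)).1.card ≤ 1 := Nat.sInf_mem hex
  exact absurd (h _ hle) (by lia)

end LevelCompression

section RegularOutcomes

variable {p α κ₁ κ₂ W : ℝ} {n m : ℕ} {ω : ℕ → ℕ → Bool}

theorem pathMass_lcOffset_zero (p α : ℝ) (ω : ℕ → ℕ → Bool) (n : ℕ) :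
    pathMass p n (ω 0) (lcOffset α ω n 0) = logb 2 n :=
  pathMass_zero n (ω 0)

theorem pathMass_lcOffset_succ_mem_Icc (hω : ω ∈ regularOutcomes p α κ₁ κ₂ W n)
    (hm : W ≤ pathMass p n (ω 0) (lcOffset α ω n m)) :
    pathMass p n (ω 0) (lcOffset α ω n (m + 1)) ∈
      Set.Icc (κ₁ * pathMass p n (ω 0) (lcOffset α ω n m))
        (κ₂ * pathMass p n (ω 0) (lcOffset α ω n m)) := by
  rw [lcOffset_succ]
  exact (hω.1 _ hm).2

theorem pow_mul_logb_le_pathMass_lcOffset (hκ₁ : κ₁ ∈ Set.Ioo (0 : ℝ) 1) (hW : 0 ≤ W)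
    (hω : ω ∈ regularOutcomes p α κ₁ κ₂ W n) (hm : W ≤ κ₁ ^ m * logb 2 n) :
    κ₁ ^ m * logb 2 n ≤ pathMass p n (ω 0) (lcOffset α ω n m) := by
  induction m with
  | zero => simp [pathMass_lcOffset_zero]
  | succ m ih =>
    rw [pow_succ', mul_assoc] at hm ⊢
    have hm' : W ≤ κ₁ ^ m * logb 2 n := hm.trans
      (mul_le_of_le_one_left ((mul_nonneg_iff_of_pos_left hκ₁.1).1 (hW.trans hm)) hκ₁.2.le)
    exact (mul_le_mul_of_nonneg_left (ih hm') hκ₁.1.le).trans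
      (pathMass_lcOffset_succ_mem_Icc hω (hm'.trans (ih hm'))).1

variable (hp : p ∈ Set.Ioo (0 : ℝ) 1)
include hp

theorem pathMass_lcOffset_le (hκ₂ : κ₂ ∈ Set.Icc (0 : ℝ) 1) (hW : 0 ≤ W)
    (hω : ω ∈ regularOutcomes p α κ₁ κ₂ W n)
    (m : ℕ) :
    pathMass p n (ω 0) (lcOffset α ω n m) ≤ max W (κ₂ ^ m * logb 2 n) := by
  induction m with
  | zero => simp [pathMass_lcOffset_zero]
  | succ m ih =>
    rcases lt_or_ge (pathMass p n (ω 0) (lcOffset α ω n m)) W with hlt | hge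
    · have hmono := antitone_pathMass hp n (ω 0)
        ((Nat.le_add_right _ 1).trans (lcOffset_add_le α ω n m 1))
      exact (hmono.trans hlt.le).trans (le_max_left _ _)
    · have hstep := (pathMass_lcOffset_succ_mem_Icc hω hge).2
      calc pathMass p n (ω 0) (lcOffset α ω n (m + 1))
          ≤ κ₂ * max W (κ₂ ^ m * logb 2 n) :=
            hstep.trans (mul_le_mul_of_nonneg_left ih hκ₂.1)
        _ = max (κ₂ * W) (κ₂ ^ (m + 1) * logb 2 n) := by
            rw [mul_max_of_nonneg _ _ hκ₂.1, pow_succ', mul_assoc]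
        _ ≤ max W (κ₂ ^ (m + 1) * logb 2 n) :=
            max_le_max_right _ (mul_le_of_le_one_left hW hκ₂.2)

theorem card_prefixFamily_lcOffset_le_one (hω : ω ∈ regularOutcomes p α κ₁ κ₂ W n) {j : ℕ}
    (hj : pathMass p n (ω 0) (lcOffset α ω n m) - minInfo p * j ≤ -W) :
    (prefixFamily ω n (lcOffset α ω n (m + j))).card ≤ 1 :=
  hω.2 _ (((antitone_pathMass hp n (ω 0) (lcOffset_add_le α ω n m j)).trans
    (pathMass_add_le n (ω 0) _ j)).trans hj)

theorem lcDepth_le_of_pow_mul_logb_le (hκ₂ : κ₂ ∈ Set.Icc (0 : ℝ) 1) (hW : 0 ≤ W)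
    (hω : ω ∈ regularOutcomes p α κ₁ κ₂ W n)
    (hm : κ₂ ^ m * logb 2 n ≤ W) : lcDepth α ω n ≤ m + ⌈2 * W / minInfo p⌉₊ := by
  refine lcDepth_le (card_prefixFamily_lcOffset_le_one hp hω ?_)
  have hceil := (div_le_iff₀' (minInfo_pos hp)).1 (Nat.le_ceil (2 * W / minInfo p))
  linarith [(pathMass_lcOffset_le hp hκ₂ hW hω m).trans (max_le le_rfl hm)]

theorem lt_lcDepth_of_le_pow_mul_logb (hκ₁ : κ₁ ∈ Set.Ioo (0 : ℝ) 1) (hW : 0 ≤ W)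
    (hω : ω ∈ regularOutcomes p α κ₁ κ₂ W n) (hm : W ≤ κ₁ ^ m * logb 2 n) :
    m < lcDepth α ω n := by
  refine lt_lcDepth (fun k hk => ?_) ?_
  · have hlog : 0 ≤ logb 2 n :=
      (mul_nonneg_iff_of_pos_left (pow_pos hκ₁.1 m)).1 (hW.trans hm)
    have hk : W ≤ κ₁ ^ k * logb 2 n := hm.trans
      (mul_le_mul_of_nonneg_right (pow_le_pow_of_le_one hκ₁.1.le hκ₁.2.le hk) hlog)
    exact (hω.1 _ (hk.trans (pow_mul_logb_le_pathMass_lcOffset hκ₁ hW hω hk))).1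
  · obtain ⟨j, hj⟩ := exists_nat_ge ((logb 2 n + W) / minInfo p)
    rw [div_le_iff₀' (minInfo_pos hp)] at hj
    refine ⟨0 + j, card_prefixFamily_lcOffset_le_one hp hω ?_⟩
    rw [pathMass_lcOffset_zero]
    linarith

end RegularOutcomes

section LogLogScale

variable {p α b b₁ b₂ ε W : ℝ} {n : ℕ} {ω : ℕ → ℕ → Bool}

theorem logb_two_rpow_neg_pow_mul {b L : ℝ} (hL : 0 < L) (m : ℕ) :
    logb 2 (((2 : ℝ) ^ (-b)) ^ m * L) = logb 2 L - m * b := by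
  rw [logb_mul (by positivity) hL.ne', logb_pow, logb_rpow two_pos (by norm_num)]
  ring

theorem two_rpow_neg_mem_Ioo {b : ℝ} (hb : 0 < b) : (2 : ℝ) ^ (-b) ∈ Set.Ioo (0 : ℝ) 1 :=
  ⟨rpow_pos_of_pos two_pos _, rpow_lt_one_of_one_lt_of_neg one_lt_two (neg_lt_zero.2 hb)⟩

theorem eventually_abs_mul_div_sub_one_le (hb : 0 < b) (h₁ : 1 - ε < b / b₁)
    (h₂ : b / b₂ < 1 + ε) (K₁ K₂ : ℝ) :
    ∀ᶠ l in atTop, ∀ D, l / b₁ - K₁ ≤ D → D ≤ l / b₂ + K₂ → |D * b / l - 1| ≤ ε := by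
  have hlim : ∀ c K : ℝ, Tendsto (fun l => (l / c + K) * b / l) atTop (nhds (b / c)) := by
    intro c K
    have hsum : Tendsto (fun l => b / c + K * b / l) atTop (nhds (b / c)) := by
      simpa using (tendsto_const_nhds (x := K * b)).div_atTop tendsto_id |>.const_add (b / c)
    refine hsum.congr' ?_
    filter_upwards [eventually_ne_atTop 0] with l hl
    field_simp
  filter_upwards [(hlim b₁ (-K₁)).eventually_const_lt h₁, (hlim b₂ K₂).eventually_lt_const h₂,
    eventually_gt_atTop 0] with l hlow hhigh hl D hD₁ hD₂
  have hD₁' : (l / b₁ + -K₁) * b / l ≤ D * b / l := by gcongr; exact hD₁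
  have hD₂' : D * b / l ≤ (l / b₂ + K₂) * b / l := by gcongr
  exact abs_le.2 ⟨by linarith, by linarith⟩

theorem exists_two_rpow_neg_brackets {κ : ℝ} (hκ : κ ∈ Set.Ioo (0 : ℝ) 1) (hε : 0 < ε) :
    ∃ b₁ > 0, ∃ b₂ > 0, (2 : ℝ) ^ (-b₁) < κ ∧ (2 : ℝ) ^ (-b₂) ∈ Set.Ioo κ 1 ∧
      1 - ε < -logb 2 κ / b₁ ∧ -logb 2 κ / b₂ < 1 + ε := by
  have hb : 0 < -logb 2 κ := neg_pos.2 (logb_neg one_lt_two hκ.1 hκ.2)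
  have hκb : (2 : ℝ) ^ (logb 2 κ) = κ := rpow_logb two_pos (by norm_num) hκ.1
  have hδ : 1 < 1 + ε / 2 := by linarith
  have hb₂ : 0 < -logb 2 κ / (1 + ε / 2) := by positivity
  refine ⟨-logb 2 κ * (1 + ε / 2), by positivity, -logb 2 κ / (1 + ε / 2), hb₂, ?_, ⟨?_, ?_⟩,
    ?_, ?_⟩
  · conv_rhs => rw [← hκb]
    exact rpow_lt_rpow_of_exponent_lt one_lt_two (neg_lt.1 (lt_mul_of_one_lt_right hb hδ))
  · conv_lhs => rw [← hκb]
    exact rpow_lt_rpow_of_exponent_lt one_lt_two (lt_neg.1 (div_lt_self hb hδ))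
  · exact (two_rpow_neg_mem_Ioo hb₂).2
  · rw [div_mul_cancel_left₀ hb.ne', ← one_div, lt_div_iff₀ (by positivity)]
    nlinarith
  · rw [div_div_cancel₀ hb.ne']
    linarith

variable (hp : p ∈ Set.Ioo (0 : ℝ) 1)
include hp

theorem logb_logb_div_sub_le_lcDepth {κ₂ : ℝ} (hb₁ : 0 < b₁) (hW : 0 < W) (hn : W ≤ logb 2 n)
    (hω : ω ∈ regularOutcomes p α (2 ^ (-b₁)) κ₂ W n) :
    logb 2 (logb 2 n) / b₁ - logb 2 W / b₁ ≤ lcDepth α ω n := by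
  have hL : 0 < logb 2 n := hW.trans_le hn
  have hlog : logb 2 W ≤ logb 2 (logb 2 n) := logb_le_logb_of_le one_lt_two hW hn
  rw [← sub_div]
  set m := ⌊(logb 2 (logb 2 n) - logb 2 W) / b₁⌋₊
  have hm : (m : ℝ) * b₁ ≤ logb 2 (logb 2 n) - logb 2 W :=
    (le_div_iff₀ hb₁).1 (Nat.floor_le (div_nonneg (sub_nonneg.2 hlog) hb₁.le))
  have hmass : W ≤ ((2 : ℝ) ^ (-b₁)) ^ m * logb 2 n := by
    rw [← logb_le_logb one_lt_two hW (by positivity), logb_two_rpow_neg_pow_mul hL]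
    linarith
  have hdepth := lt_lcDepth_of_le_pow_mul_logb hp (two_rpow_neg_mem_Ioo hb₁) hW.le hω hmass
  exact (Nat.lt_floor_add_one _).le.trans (by exact_mod_cast hdepth)

theorem lcDepth_le_logb_logb_div_add {κ₁ : ℝ} (hb₂ : 0 < b₂) (hW : 1 ≤ W) (hn : 1 ≤ logb 2 n)
    (hω : ω ∈ regularOutcomes p α κ₁ (2 ^ (-b₂)) W n) :
    (lcDepth α ω n : ℝ) ≤ logb 2 (logb 2 n) / b₂ + (1 + ⌈2 * W / minInfo p⌉₊) := by
  have hL : 0 < logb 2 n := one_pos.trans_le hn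
  set m := ⌈logb 2 (logb 2 n) / b₂⌉₊
  have hm : logb 2 (logb 2 n) ≤ m * b₂ := (div_le_iff₀ hb₂).1 (Nat.le_ceil _)
  have hmass : ((2 : ℝ) ^ (-b₂)) ^ m * logb 2 n ≤ W := by
    refine le_trans ?_ hW
    rw [← logb_nonpos_iff one_lt_two (by positivity), logb_two_rpow_neg_pow_mul hL]
    linarith
  have hdepth : (lcDepth α ω n : ℝ) ≤ m + ⌈2 * W / minInfo p⌉₊ := by
    exact_mod_cast lcDepth_le_of_pow_mul_logb_le hp
      (Set.Ioo_subset_Icc_self (two_rpow_neg_mem_Ioo hb₂)) (one_pos.le.trans hW) hω hmass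
  have hceil : (m : ℝ) < logb 2 (logb 2 n) / b₂ + 1 :=
    Nat.ceil_lt_add_one (div_nonneg (logb_nonneg one_lt_two hn) hb₂.le)
  linarith

theorem eventually_regularOutcomes_subset (hb₁ : 0 < b₁) (hb₂ : 0 < b₂) (hW : 1 ≤ W) (hb : 0 < b)
    (h₁ : 1 - ε < b / b₁) (h₂ : b / b₂ < 1 + ε) :
    ∀ᶠ n : ℕ in atTop, regularOutcomes p α (2 ^ (-b₁)) (2 ^ (-b₂)) W n ⊆
      {ω | |(lcDepth α ω n : ℝ) * b / logb 2 (logb 2 n) - 1| ≤ ε} := by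
  have hlog : Tendsto (fun n : ℕ => logb 2 n) atTop atTop :=
    (tendsto_logb_atTop one_lt_two).comp tendsto_natCast_atTop_atTop
  filter_upwards [hlog.eventually_ge_atTop W, ((tendsto_logb_atTop one_lt_two).comp hlog).eventually
    (eventually_abs_mul_div_sub_one_le hb h₁ h₂ (logb 2 W / b₁) (1 + ⌈2 * W / minInfo p⌉₊))]
    with n hn hscale ω hω
  exact hscale _ (logb_logb_div_sub_le_lcDepth hp hb₁ (one_pos.trans_le hW) hn hω)
    (lcDepth_le_logb_logb_div_add hp hb₂ hW (hW.trans hn) hω)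

end LogLogScale

/-- Theorem 3 of Janson–Szpankowski: for `p ≠ 1/2`,
`D_n(α) / log log n → 1 / (-log(1 - h / log(1/√(pq))))` in probability. -/
theorem lcDepth_in_probability
    (p q α : ℝ) (hp : 0 < p) (hp1 : p < 1) (hp2 : p ≠ 1 / 2) (hq : q = 1 - p)
    (hα : 0 < α) (hα1 : α < 1)
    (h : ℝ) (hh : h = -(p * Real.logb 2 p) - q * Real.logb 2 q)
    (ν : Measure (ℕ → ℕ → Bool)) (hν : IIDBits p ν) :
    ∀ ε > (0 : ℝ),
      Tendsto
        (fun n : ℕ =>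
          ν {ω | ε <
            |(lcDepth α ω n : ℝ) *
                (-Real.logb 2 (1 - h / Real.logb 2 (1 / Real.sqrt (p * q)))) /
                Real.logb 2 (Real.logb 2 n) - 1|})
        atTop (nhds 0) := by
  intro ε hε
  subst h q
  have hp' : p ∈ Set.Ioo (0 : ℝ) 1 := ⟨hp, hp1⟩
  rw [← bitEntropy_eq, ← meanInfo_eq hp']
  have hκ := one_sub_bitEntropy_div_meanInfo_mem_Ioo hp' hp2
  obtain ⟨b₁, hb₁, b₂, hb₂, hκ₁, hκ₂, hlow, hhigh⟩ := exists_two_rpow_neg_brackets hκ hε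
  refine ENNReal.tendsto_nhds_zero.2 fun e he => ?_
  obtain ⟨W, hW, hbound⟩ :=
    hν.exists_measure_compl_regularOutcomes_le hp' ⟨hα, hα1⟩ hκ₁ hκ₂ he
  filter_upwards [eventually_ge_atTop 1, eventually_regularOutcomes_subset hp' hb₁ hb₂ hW
    (neg_pos.2 (logb_neg one_lt_two hκ.1 hκ.2)) hlow hhigh] with n hn hsub
  exact (measure_mono fun ω (hω : ε < _) hreg => hω.not_ge (hsub hreg)).trans (hbound n hn)
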